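/- arXiv:2111.07912 — 3 statements merged into one kernel-verified Lean document; each statement's English description precedes it below -/
import Mathlib

section
/- The numerator R(q) of the q-rational [r/s]_q is the rank generating function of the lattice of lower order ideals of the fence poset F(r/s): the coefficient of q^k in R(q) equals the number of order ideals of F(r/s) of size k. -/
open scoped Classical

/-- The word of up/down steps of the fence poset `F(r/s)` for `r/s = [a₁,…,a₂ₘ]`:
`false` = up, `true` = down, with blocks `a₁-1, a₂, a₃, …, a₂ₘ₋₁, a₂ₘ-1`. -/
def fenceWord (a : List ℕ) : List Bool :=
  (List.range a.length).flatMap fun i =>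
    List.replicate
      (if i = 0 ∨ i = a.length - 1 then a.getD i 0 - 1 else a.getD i 0)
      (i % 2 == 1)

/-- `S` is a lower order ideal of the fence poset `F(r/s)` on the `N-1` elements
`x_1,…,x_{N-1}` (`N = ∑ aᵢ`, element `x_{j+1}` encoded as `j : Fin (N-1)`): it is
downward closed for each cover relation `x_{j+1} < x_{j+2}` (edge `j` up) or
`x_{j+1} > x_{j+2}` (edge `j` down). -/
def IsFenceIdeal (a : List ℕ) (S : Finset (Fin (a.sum - 1))) : Prop :=
  ∀ (j : ℕ) (h : j + 1 < a.sum - 1),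
    if (fenceWord a).getD j false then
      ((⟨j, by omega⟩ : Fin (a.sum - 1)) ∈ S → (⟨j + 1, h⟩ : Fin (a.sum - 1)) ∈ S)
    else
      ((⟨j + 1, h⟩ : Fin (a.sum - 1)) ∈ S → (⟨j, by omega⟩ : Fin (a.sum - 1)) ∈ S)

/-- The Morier-Genoud–Ovsienko q-deformed continued fraction. -/
noncomputable def qCF : RatFunc ℚ → List ℕ → RatFunc ℚ
  | _, [] => 0
  | v, [a] => ∑ i ∈ Finset.range a, v ^ i
  | v, a :: b :: l => (∑ i ∈ Finset.range a, v ^ i) + v ^ a / qCF v⁻¹ (b :: l)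

/-- The relation imposed on the memberships `b`, `c` of consecutive elements in an order ideal
by an up step (`false`) or a down step (`true`) between them. -/
def StepCompat (s b c : Bool) : Prop :=
  if s then (b = true → c = true) else (c = true → b = true)

/-- The indicator functions of order ideals of a fence on `n + 1` elements. -/
def IdealIndicator (w : List Bool) (n : ℕ) (g : Fin (n + 1) → Bool) : Prop :=
  ∀ j : Fin n, StepCompat (w.getD j false) (g j.castSucc) (g j.succ)

/-- The transfer recursion for the rank generating function of the order ideals of the fence with
step word `w`: the first component counts ideals without the first element, the second one ideals
with it. -/
noncomputable def fenceGen : List Bool → Polynomial ℚ × Polynomial ℚ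
  | [] => (1, Polynomial.X)
  | false :: w => ((fenceGen w).1, Polynomial.X * ((fenceGen w).1 + (fenceGen w).2))
  | true :: w => ((fenceGen w).1 + (fenceGen w).2, Polynomial.X * (fenceGen w).2)

theorem idealIndicator_cons (s : Bool) (w : List Bool) (n : ℕ) (b : Bool)
    (g : Fin (n + 1) → Bool) :
    IdealIndicator (s :: w) (n + 1) (Fin.cons b g : Fin (n + 2) → Bool) ↔
      StepCompat s b (g 0) ∧ IdealIndicator w n g := by
  simp only [IdealIndicator, Fin.forall_fin_succ (n := n)]
  simp

/-- The weight of an indicator function in the rank generating function. -/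
noncomputable def idealWeight (w : List Bool) (n : ℕ) (g : Fin (n + 1) → Bool) : Polynomial ℚ :=
  if IdealIndicator w n g then Polynomial.X ^ (∑ i, (g i).toNat) else 0

theorem sum_fin_cons_bool {M : Type*} [AddCommMonoid M] (n : ℕ) (F : (Fin (n + 1) → Bool) → M) :
    ∑ g, F g = ∑ f : Fin n → Bool, F (Fin.cons false f : Fin (n + 1) → Bool) +
      ∑ f : Fin n → Bool, F (Fin.cons true f : Fin (n + 1) → Bool) := by
  rw [← (Fin.consEquiv fun _ : Fin (n + 1) => Bool).sum_comp, Fintype.sum_prod_type,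
    Fintype.sum_bool, add_comm]
  rfl

theorem idealWeight_cons (s : Bool) (w : List Bool) (n : ℕ) (b : Bool)
    (g : Fin (n + 1) → Bool) :
    idealWeight (s :: w) (n + 1) (Fin.cons b g : Fin (n + 2) → Bool) =
      if StepCompat s b (g 0) then Polynomial.X ^ b.toNat * idealWeight w n g else 0 := by
  simp only [idealWeight, idealIndicator_cons, Fin.sum_univ_succ (n := n + 1), Fin.cons_zero,
    Fin.cons_succ, pow_add]
  split_ifs <;> simp_all

theorem fenceGen_eq_sum_idealWeight (w : List Bool) :
    fenceGen w =
      (∑ f : Fin w.length → Bool,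
          idealWeight w w.length (Fin.cons false f : Fin (w.length + 1) → Bool),
        ∑ f : Fin w.length → Bool,
          idealWeight w w.length (Fin.cons true f : Fin (w.length + 1) → Bool)) := by
  induction w with
  | nil => simp [fenceGen, idealWeight, IdealIndicator]
  | cons s w ih =>
    simp only [List.length_cons, sum_fin_cons_bool w.length]
    cases s <;>
      simp [fenceGen, ih, idealWeight_cons, StepCompat, mul_add, Finset.mul_sum]

theorem fenceGen_add_coeff (w : List Bool) (k : ℕ) :
    ((fenceGen w).1 + (fenceGen w).2).coeff k =
      ((Finset.univ.filter fun g : Fin (w.length + 1) → Bool =>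
        IdealIndicator w w.length g ∧ ∑ i, (g i).toNat = k).card : ℚ) := by
  rw [fenceGen_eq_sum_idealWeight]
  simp only
  rw [← sum_fin_cons_bool w.length, Polynomial.finsetSum_coeff, Finset.card_filter]
  push_cast
  refine Finset.sum_congr rfl fun g _ => ?_
  by_cases h : IdealIndicator w w.length g
  · simp [idealWeight, h, Polynomial.coeff_X_pow, eq_comm]
  · simp [idealWeight, h]

theorem card_filter_ideal_eq_card_idealIndicator (w : List Bool) (N : ℕ) (hN : N = w.length + 1)
    (k : ℕ) :
    ((Finset.univ : Finset (Finset (Fin N))).filter fun S =>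
      (∀ (j : ℕ) (h : j + 1 < N),
        if w.getD j false then
          ((⟨j, by omega⟩ : Fin N) ∈ S → (⟨j + 1, h⟩ : Fin N) ∈ S)
        else
          ((⟨j + 1, h⟩ : Fin N) ∈ S → (⟨j, by omega⟩ : Fin N) ∈ S)) ∧ S.card = k).card =
      (Finset.univ.filter fun g : Fin (w.length + 1) → Bool =>
        IdealIndicator w w.length g ∧ ∑ i, (g i).toNat = k).card := by
  subst hN
  refine Finset.card_nbij' (fun S i => decide (i ∈ S))
    (fun g => Finset.univ.filter fun i => g i = true) ?_ ?_ ?_ ?_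
  · intro S hS
    simp only [Finset.coe_filter, Finset.mem_univ, true_and, Set.mem_ofPred_eq] at hS ⊢
    refine ⟨fun j => ?_, ?_⟩
    · simp only [StepCompat, decide_eq_true_eq]
      exact hS.1 j (by omega)
    · rw [← hS.2]
      simp [Bool.toNat, Bool.cond_decide]
  · intro g hg
    simp only [Finset.coe_filter, Finset.mem_univ, true_and, Set.mem_ofPred_eq] at hg ⊢
    refine ⟨fun j h => ?_, ?_⟩
    · have := hg.1 ⟨j, by omega⟩
      simpa [StepCompat] using this
    · rw [← hg.2, Finset.card_filter]
      refine Finset.sum_congr rfl fun i _ => ?_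
      cases g i <;> rfl
  · intro S _
    simp
  · intro g _
    simp

theorem fenceWord_pair (a b : ℕ) :
    fenceWord [a, b] = List.replicate (a - 1) false ++ List.replicate (b - 1) true := by
  simp [fenceWord, List.range_succ]

theorem fenceWord_cons_cons (a b c d : ℕ) (l : List ℕ) (hc : 1 ≤ c) :
    fenceWord (a :: b :: c :: d :: l) = List.replicate (a - 1) false ++
      (List.replicate b true ++ (false :: fenceWord (c :: d :: l))) := by
  obtain ⟨c, rfl⟩ := Nat.exists_eq_add_of_le' hc
  simp only [fenceWord, List.length_cons]
  rw [List.range_succ_eq_map, List.range_succ_eq_map, List.range_succ_eq_map,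
    List.range_succ_eq_map]
  simp only [List.map_cons, List.map_map, List.flatMap_cons, List.flatMap_map]
  simp [List.replicate_succ, Function.comp_def, Nat.add_mod]

theorem fenceGen_replicate_false_append (w : List Bool) (n : ℕ) :
    (fenceGen (List.replicate n false ++ w)).1 = (fenceGen w).1 ∧
      (fenceGen (List.replicate n false ++ w)).2 =
        Polynomial.X * (∑ i ∈ Finset.range n, Polynomial.X ^ i) * (fenceGen w).1 +
          Polynomial.X ^ n * (fenceGen w).2 := by
  induction n with
  | zero => simp
  | succ n ih =>
    simp only [List.replicate_succ, List.cons_append, fenceGen, ih.1, ih.2, true_and,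
      geom_sum_succ]
    ring

theorem fenceGen_replicate_true_append (w : List Bool) (n : ℕ) :
    (fenceGen (List.replicate n true ++ w)).2 = Polynomial.X ^ n * (fenceGen w).2 ∧
      (fenceGen (List.replicate n true ++ w)).1 =
        (fenceGen w).1 + (∑ i ∈ Finset.range n, Polynomial.X ^ i) * (fenceGen w).2 := by
  induction n with
  | zero => simp
  | succ n ih =>
    simp only [List.replicate_succ, List.cons_append, fenceGen, ih.1, ih.2,
      Finset.sum_range_succ]
    constructor <;> ring

theorem isCoprime_X_of_coeff_zero_eq_one {S : Polynomial ℚ} (h : S.coeff 0 = 1) :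
    IsCoprime Polynomial.X S := by
  refine ⟨-S.divX, 1, ?_⟩
  have := Polynomial.X_mul_divX_add S
  rw [h, map_one] at this
  linear_combination -this

theorem geom_sum_inv_eq {K : Type*} [Field K] {v : K} (hv : v ≠ 0) (b : ℕ) :
    ∑ i ∈ Finset.range b, v⁻¹ ^ i = v * (∑ i ∈ Finset.range b, v ^ i) / v ^ b := by
  induction b with
  | zero => simp
  | succ b ih =>
    rw [Finset.sum_range_succ, ih, geom_sum_succ, inv_pow, pow_succ]
    field_simp

theorem num_div_of_isCoprime_of_monic {R S : Polynomial ℚ} (h : IsCoprime R S) (hS : S.Monic) :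
    (algebraMap _ (RatFunc ℚ) R / algebraMap _ (RatFunc ℚ) S).num = R := by
  set x := algebraMap _ (RatFunc ℚ) R / algebraMap _ (RatFunc ℚ) S with hx
  have e : x.num * S = R * x.denom := (RatFunc.num_mul_eq_mul_denom_iff hS.ne_zero).2 hx
  have hd : x.denom = S := Polynomial.eq_of_monic_of_associated x.monic_denom hS
    (associated_of_dvd_dvd
      (x.isCoprime_num_denom.symm.dvd_of_dvd_mul_left (e ▸ Dvd.intro_left _ rfl))
      (h.symm.dvd_of_dvd_mul_left (e ▸ Dvd.intro_left _ rfl)))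
  rw [hd] at e
  exact mul_right_cancel₀ hS.ne_zero e

theorem monic_geom_sum {n : ℕ} (hn : 1 ≤ n) :
    (∑ i ∈ Finset.range n, (Polynomial.X : Polynomial ℚ) ^ i).Monic :=
  Polynomial.monic_geom_sum_X (by omega)

theorem natDegree_geom_sum_lt {n : ℕ} (hn : 1 ≤ n) :
    (∑ i ∈ Finset.range n, (Polynomial.X : Polynomial ℚ) ^ i).natDegree < n := by
  refine (Polynomial.natDegree_sum_le _ _).trans_lt ?_
  rw [Finset.fold_max_lt]
  exact ⟨by omega, fun i hi => by simpa using hi⟩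

theorem geom_sum_coeff_zero {n : ℕ} (hn : 1 ≤ n) :
    (∑ i ∈ Finset.range n, (Polynomial.X : Polynomial ℚ) ^ i).coeff 0 = 1 := by
  obtain ⟨n, rfl⟩ := Nat.exists_eq_add_of_le' hn
  simp [geom_sum_succ]

theorem monic_geom_sum_mul_add {S T : Polynomial ℚ} {a n : ℕ} (hS : S.Monic) (hT : T.Monic)
    (h : S.natDegree + a ≤ n + T.natDegree) (ha : 1 ≤ a) :
    ((∑ i ∈ Finset.range a, Polynomial.X ^ i) * S + Polynomial.X ^ n * T).Monic ∧
      ((∑ i ∈ Finset.range a, Polynomial.X ^ i) * S + Polynomial.X ^ n * T).natDegree =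
        n + T.natDegree := by
  have hG := monic_geom_sum ha
  have hGd := natDegree_geom_sum_lt ha
  have hM : (Polynomial.X ^ n * T).Monic := (Polynomial.monic_X_pow n).mul hT
  have hMd : (Polynomial.X ^ n * T).natDegree = n + T.natDegree := by
    rw [(Polynomial.monic_X_pow n).natDegree_mul hT, Polynomial.natDegree_X_pow]
  have hlt : ((∑ i ∈ Finset.range a, Polynomial.X ^ i) * S).natDegree <
      (Polynomial.X ^ n * T).natDegree := by
    rw [hG.natDegree_mul hS, hMd]
    omega
  exact ⟨hM.add_of_right (Polynomial.degree_lt_degree hlt),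
    (Polynomial.natDegree_add_eq_right_of_natDegree_lt hlt).trans hMd⟩

theorem qCF_two_step {K : Type*} [Field K] {v : K} (hv : v ≠ 0) (a b : ℕ) {R S : K} (hR : R ≠ 0)
    (h : v * (∑ i ∈ Finset.range b, v ^ i) * R + S ≠ 0) :
    (∑ i ∈ Finset.range a, v ^ i) + v ^ a /
        ((∑ i ∈ Finset.range b, v⁻¹ ^ i) + v⁻¹ ^ b / (R / S)) =
      ((∑ i ∈ Finset.range a, v ^ i) * (v * (∑ i ∈ Finset.range b, v ^ i) * R + S) +
        v ^ (a + b) * R) / (v * (∑ i ∈ Finset.range b, v ^ i) * R + S) := by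
  have e : (∑ i ∈ Finset.range b, v⁻¹ ^ i) + v⁻¹ ^ b / (R / S) =
      (v * (∑ i ∈ Finset.range b, v ^ i) * R + S) / (v ^ b * R) := by
    rw [geom_sum_inv_eq hv, inv_pow]
    field_simp
  rw [e, pow_add]
  field_simp

/-- The invariant of the two-block recursion: the `q`-rational is a reduced fraction `R / S` whose
terms are read off from the generating functions of the fence with an extra initial up step. -/
theorem exists_qCF_eq_div (l : List ℕ) : ∀ m : ℕ, 0 < m → l.length = 2 * m →
    (∀ x ∈ l, 1 ≤ x) → ∃ R S : Polynomial ℚ, R.Monic ∧ S.Monic ∧ S.natDegree ≤ R.natDegree ∧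
      S.coeff 0 = 1 ∧ IsCoprime R S ∧
      qCF RatFunc.X l = algebraMap _ (RatFunc ℚ) R / algebraMap _ (RatFunc ℚ) S ∧
      fenceGen (false :: fenceWord l) = (S, Polynomial.X * R) ∧
      (fenceWord l).length + 2 = l.sum := by
  induction l using List.twoStepInduction with
  | nil => intro m hm h; simp at h; omega
  | singleton x => intro m hm h; simp at h; omega
  | cons_cons a b l ih _ =>
  intro m hm hlen hpos
  have ha : 1 ≤ a := hpos a (by simp)
  have hb : 1 ≤ b := hpos b (by simp)
  have hX : (RatFunc.X : RatFunc ℚ) ≠ 0 := RatFunc.X_ne_zero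
  have hmap (n : ℕ) : algebraMap (Polynomial ℚ) (RatFunc ℚ)
      (∑ i ∈ Finset.range n, Polynomial.X ^ i) = ∑ i ∈ Finset.range n, RatFunc.X ^ i := by
    simp [map_sum]
  have hG := monic_geom_sum hb
  have hGd := natDegree_geom_sum_lt hb
  have hG0 := geom_sum_coeff_zero hb
  have hup (w : List Bool) : false :: (List.replicate (a - 1) false ++ w) =
      List.replicate a false ++ w := by
    obtain ⟨a, rfl⟩ := Nat.exists_eq_add_of_le' ha
    rfl
  match l with
  | [] =>
    obtain ⟨hR, hRd⟩ := monic_geom_sum_mul_add (a := a) (n := a + b - 1) hG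
      Polynomial.monic_one (by simp; omega) ha
    refine ⟨_, _, hR, hG, by rw [hRd]; simp; omega, hG0, ?_, ?_, ?_, ?_⟩
    · rw [mul_one, IsCoprime.mul_add_right_left_iff]
      exact (isCoprime_X_of_coeff_zero_eq_one hG0).pow_left
    · have hne : (∑ i ∈ Finset.range b, (RatFunc.X : RatFunc ℚ) ^ i) ≠ 0 := by
        rw [← hmap]
        exact RatFunc.algebraMap_ne_zero hG.ne_zero
      obtain ⟨b, rfl⟩ := Nat.exists_eq_add_of_le' hb
      simp only [qCF, map_add, map_mul, hmap, geom_sum_inv_eq hX, map_pow, RatFunc.algebraMap_X,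
        mul_one]
      rw [← add_assoc, Nat.add_sub_cancel, pow_add, pow_succ]
      field_simp
      ring
    · obtain ⟨b, rfl⟩ := Nat.exists_eq_add_of_le' hb
      have hd := fenceGen_replicate_true_append [] b
      have hu := fenceGen_replicate_false_append (List.replicate b true) a
      rw [List.append_nil] at hd
      rw [fenceWord_pair, hup, Nat.add_sub_cancel, Prod.ext_iff, hu.1, hu.2, hd.1, hd.2]
      simp only [fenceGen, ← add_assoc, Nat.add_sub_cancel, pow_add, Finset.sum_range_succ' _ b,
        pow_one, ← Finset.sum_mul]
      constructor <;> ring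
    · simp [fenceWord_pair]
      omega
  | [c] => simp at hlen; omega
  | c :: d :: l =>
    obtain ⟨R, S, hR, hS, hd, h0, hc, hq, hf, hl⟩ := ih (m - 1) (by simp at hlen; omega)
      (by simp at hlen ⊢; omega) (fun x hx => hpos x (by simp [hx]))
    have hc1 : 1 ≤ c := hpos c (by simp)
    set G := ∑ i ∈ Finset.range b, (Polynomial.X : Polynomial ℚ) ^ i
    have hP : (Polynomial.X * G * R).Monic := (Polynomial.monic_X.mul hG).mul hR
    have hPd : (Polynomial.X * G * R).natDegree = 1 + G.natDegree + R.natDegree := by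
      rw [(Polynomial.monic_X.mul hG).natDegree_mul hR, Polynomial.monic_X.natDegree_mul hG,
        Polynomial.natDegree_X]
    have hlt : S.natDegree < (Polynomial.X * G * R).natDegree := by omega
    have hS' : (Polynomial.X * G * R + S).Monic :=
      hP.add_of_left (Polynomial.degree_lt_degree hlt)
    have hSd' := (Polynomial.natDegree_add_eq_left_of_natDegree_lt hlt).trans hPd
    have h0' : (Polynomial.X * G * R + S).coeff 0 = 1 := by simp [mul_assoc, h0]
    obtain ⟨hR', hRd'⟩ := monic_geom_sum_mul_add (a := a) (n := a + b) hS' hR (by omega) ha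
    refine ⟨_, _, hR', hS', by omega, h0', ?_, ?_, ?_, ?_⟩
    · rw [IsCoprime.mul_add_right_left_iff]
      refine (isCoprime_X_of_coeff_zero_eq_one h0').pow_left.mul_left ?_
      exact hc.mul_add_right_right _
    · have hRne : algebraMap _ (RatFunc ℚ) R ≠ 0 := RatFunc.algebraMap_ne_zero hR.ne_zero
      have hSne : algebraMap _ (RatFunc ℚ) (Polynomial.X * G * R + S) ≠ 0 :=
        RatFunc.algebraMap_ne_zero hS'.ne_zero
      simp only [map_add, map_mul, hmap, map_pow, RatFunc.algebraMap_X, G] at hSne ⊢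
      rw [← qCF_two_step hX a b hRne hSne, ← hq]
      simp only [qCF, inv_inv]
    · have hd := fenceGen_replicate_true_append (false :: fenceWord (c :: d :: l)) b
      have hu := fenceGen_replicate_false_append
        (List.replicate b true ++ false :: fenceWord (c :: d :: l)) a
      rw [fenceWord_cons_cons _ _ _ _ _ hc1, hup, Prod.ext_iff, hu.1, hu.2, hd.1, hd.2, hf]
      constructor <;> ring
    · simp only [fenceWord_cons_cons _ _ _ _ _ hc1, List.length_append, List.length_replicate,
        List.length_cons]
      rw [List.sum_cons, List.sum_cons]
      omega

/-- The numerator `R(q)` of `[r/s]_q` is the rank generating function of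
the lattice of lower order ideals of the fence poset `F(r/s)`: the coefficient of `q^k`
in `R(q)` is the number of order ideals of `F(r/s)` of size `k`. -/
theorem num_qRational_coeff_eq_card_fence_ideals
    (m : ℕ) (hm : 0 < m) (a : List ℕ) (hlen : a.length = 2 * m)
    (hpos : ∀ x ∈ a, 1 ≤ x) (h1 : 1 < a.getD 0 0) (k : ℕ) :
    (qCF RatFunc.X a).num.coeff k =
      (((Finset.univ : Finset (Finset (Fin (a.sum - 1)))).filter
        fun S => IsFenceIdeal a S ∧ S.card = k).card : ℚ) := by
  obtain ⟨R, S, -, hS, -, -, hc, hq, hf, hl⟩ := exists_qCF_eq_div a m hm hlen hpos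
  have hR : (fenceGen (fenceWord a)).1 + (fenceGen (fenceWord a)).2 = R := by
    rw [fenceGen, Prod.mk.injEq] at hf
    exact mul_left_cancel₀ Polynomial.X_ne_zero hf.2
  have hN : a.sum - 1 = (fenceWord a).length + 1 := by omega
  rw [hq, num_div_of_isCoprime_of_monic hc hS, ← hR, fenceGen_add_coeff,
    ← card_filter_ideal_eq_card_idealIndicator _ _ hN]
  rfl
end

section
/- The poset of monotone lattice paths on the snake graph G(r/s), ordered by containment of the set of tiles above the path, is isomorphic to the interval [μ, λ] in Young's lattice, where λ = λ(r/s) and μ = μ(r/s); consequently R(q) = q^{−|μ|} ∑_{μ ≤ ν ≤ λ} q^{|ν|} where R(q) is the numerator of [r/s]_q. -/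
open scoped Classical

def snakeWord (a : List ℕ) : List Bool :=
  (List.range a.length).flatMap fun i =>
    List.replicate
      (if i = 0 ∨ i = a.length - 1 then a.getD i 0 - 1 else a.getD i 0)
      (i % 2 == 1)

def tilePos (w : List Bool) (j : ℕ) : ℕ × ℕ :=
  ((w.take j).count false, (w.take j).count true)

def snakeHeight (w : List Bool) : ℕ := w.count true + 1

def rowLen (w : List Bool) (y : ℕ) : ℕ :=
  ((Finset.range (w.length + 1)).filter fun j => (tilePos w j).2 ≤ y).sup
    (fun j => (tilePos w j).1) + 1

def rowMin (w : List Bool) (y : ℕ) : ℕ :=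
  rowLen w y - ((Finset.range (w.length + 1)).filter fun j => (tilePos w j).2 = y).card

/-- The `y`-th part (0-indexed, from the largest) of the partition `λ(G)`. -/
def lamPart (w : List Bool) (y : ℕ) : ℕ :=
  if y < snakeHeight w then rowLen w (snakeHeight w - 1 - y) else 0

/-- The `y`-th part (0-indexed, from the largest) of the partition `μ(G)`. -/
def muPart (w : List Bool) (y : ℕ) : ℕ :=
  if y < snakeHeight w then rowMin w (snakeHeight w - 1 - y) else 0

def IsSnakePath (w : List Bool) (p : Fin (w.length + 3) → ℕ × ℕ) : Prop :=
  p 0 = (0, 0) ∧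
  p (Fin.last _) = ((tilePos w w.length).1 + 1, (tilePos w w.length).2 + 1) ∧
  ∀ i : Fin (w.length + 2), ∃ j ≤ w.length,
    (p i.succ = ((p i.castSucc).1 + 1, (p i.castSucc).2) ∧
      (p i.castSucc = tilePos w j ∨
       p i.castSucc = ((tilePos w j).1, (tilePos w j).2 + 1))) ∨
    (p i.succ = ((p i.castSucc).1, (p i.castSucc).2 + 1) ∧
      (p i.castSucc = tilePos w j ∨
       p i.castSucc = ((tilePos w j).1 + 1, (tilePos w j).2)))

/-- Tile `j` lies above the path `p`. -/
def TileAbove (w : List Bool) (p : Fin (w.length + 3) → ℕ × ℕ) (j : ℕ) : Prop :=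
  ∃ (i : Fin (w.length + 2)) (y : ℕ), y ≤ (tilePos w j).2 ∧
    p i.castSucc = ((tilePos w j).1, y) ∧ p i.succ = ((tilePos w j).1 + 1, y)

theorem tilePos_zero (w : List Bool) : tilePos w 0 = (0, 0) := by simp [tilePos]

theorem tilePos_succ (w : List Bool) (j : ℕ) (hj : j < w.length) :
    (w.getD j false = false ∧ tilePos w (j + 1) = ((tilePos w j).1 + 1, (tilePos w j).2)) ∨
    (w.getD j false = true ∧ tilePos w (j + 1) = ((tilePos w j).1, (tilePos w j).2 + 1)) := by
  have h : w.take (j + 1) = w.take j ++ [w[j]] := by simp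
  have hg : w.getD j false = w[j] := by simp [hj]
  rw [hg]
  cases hb : w[j] <;> simp [tilePos, h, hb]

theorem tilePos_add (w : List Bool) (j : ℕ) (hj : j ≤ w.length) :
    (tilePos w j).1 + (tilePos w j).2 = j := by
  induction j with
  | zero => simp [tilePos_zero]
  | succ j ih =>
    have := ih (by omega)
    rcases tilePos_succ w j (by omega) with ⟨-, h⟩ | ⟨-, h⟩ <;> rw [h] <;> simp only <;> omega

theorem tilePos_snd_mono (w : List Bool) : Monotone fun j => (tilePos w j).2 := by
  intro i j hij
  exact (List.take_sublist_take_left hij).count_le _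

theorem tilePos_fst_mono (w : List Bool) : Monotone fun j => (tilePos w j).1 := by
  intro i j hij
  exact (List.take_sublist_take_left hij).count_le _

theorem tilePos_snd_lt (w : List Bool) (j : ℕ) : (tilePos w j).2 < snakeHeight w :=
  Nat.lt_succ_of_le ((List.take_sublist j w).count_le _)

theorem tilePos_length_snd (w : List Bool) : (tilePos w w.length).2 + 1 = snakeHeight w := by
  simp [tilePos, snakeHeight]

/-- The tiles of a row form an interval of indices, and determine `rowMin` and `rowLen`. -/
theorem row_spec (w : List Bool) (y : ℕ) (hy : y < snakeHeight w) :
    ∃ I J, I ≤ J ∧ J ≤ w.length ∧ y ≤ I ∧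
      (∀ j ≤ w.length, (tilePos w j).2 = y ↔ I ≤ j ∧ j ≤ J) ∧
      rowLen w y = J - y + 1 ∧ rowMin w y = I - y := by
  have hn := tilePos_length_snd w
  have hex : ∃ j, j ≤ w.length ∧ y ≤ (tilePos w j).2 := ⟨w.length, le_rfl, by omega⟩
  obtain ⟨hI, hyI⟩ := Nat.find_spec hex
  have hmin : ∀ j, j < Nat.find hex → (tilePos w j).2 < y := by
    intro j hj
    have := Nat.find_min hex hj
    push Not at this
    exact this (by omega)
  set I := Nat.find hex
  have hIy : (tilePos w I).2 = y := by
    rcases Nat.eq_zero_or_pos I with h0 | h0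
    · rw [h0, tilePos_zero] at hyI ⊢
      simp only at *
      omega
    · have h1 := hmin (I - 1) (by omega)
      have h2 := tilePos_succ w (I - 1) (by omega)
      rw [Nat.sub_add_cancel h0] at h2
      rcases h2 with ⟨-, h⟩ | ⟨-, h⟩ <;> rw [h] at hyI ⊢ <;> simp only at * <;> omega
  set S := (Finset.range (w.length + 1)).filter fun j => (tilePos w j).2 ≤ y
  have hS : ∀ j, j ∈ S ↔ j ≤ w.length ∧ (tilePos w j).2 ≤ y := by
    intro j
    simp [S]
  have hIS : I ∈ S := (hS I).2 ⟨hI, hIy.le⟩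
  have hne : S.Nonempty := ⟨I, hIS⟩
  obtain ⟨hJ, hJy⟩ := (hS _).1 (S.max'_mem hne)
  have hmax : ∀ j ∈ S, j ≤ S.max' hne := fun j hj => S.le_max' j hj
  set J := S.max' hne
  have hIJ : I ≤ J := hmax I hIS
  have hIJy := tilePos_snd_mono w hIJ
  have hIadd := tilePos_add w I hI
  have hJadd := tilePos_add w J hJ
  simp only at hIJy
  have hrow : ∀ j ≤ w.length, (tilePos w j).2 = y ↔ I ≤ j ∧ j ≤ J := by
    intro j hj
    constructor
    · intro h
      refine ⟨?_, hmax j ((hS j).2 ⟨hj, h.le⟩)⟩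
      by_contra hlt
      have := hmin j (by omega)
      omega
    · rintro ⟨h1, h2⟩
      have a1 := tilePos_snd_mono w h1
      have a2 := tilePos_snd_mono w h2
      simp only at a1 a2
      omega
  have hlen : rowLen w y = J - y + 1 := by
    unfold rowLen
    congr 1
    apply le_antisymm
    · refine Finset.sup_le fun j hj => ?_
      have := tilePos_fst_mono w (hmax j hj)
      simp only at this
      omega
    · have : (tilePos w J).1 ≤ S.sup fun j => (tilePos w j).1 :=
        Finset.le_sup (f := fun j => (tilePos w j).1) ((hS J).2 ⟨hJ, hJy⟩)
      exact le_trans (by omega) this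
  refine ⟨I, J, hIJ, hJ, by omega, hrow, hlen, ?_⟩
  have hcard : ((Finset.range (w.length + 1)).filter fun j => (tilePos w j).2 = y)
      = Finset.Icc I J := by
    ext j
    simp only [Finset.mem_filter, Finset.mem_range, Finset.mem_Icc, Nat.lt_succ_iff]
    constructor
    · rintro ⟨h1, h2⟩
      exact (hrow j h1).1 h2
    · intro h
      exact ⟨by omega, (hrow j (by omega)).2 h⟩
  rw [rowMin, hcard, hlen, Nat.card_Icc]
  omega

theorem rowMin_lt_rowLen (w : List Bool) (y : ℕ) (hy : y < snakeHeight w) :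
    rowMin w y < rowLen w y := by
  obtain ⟨I, J, h⟩ := row_spec w y hy
  omega

theorem tilePos_fst_mem_row (w : List Bool) (j : ℕ) (hj : j ≤ w.length) :
    rowMin w (tilePos w j).2 ≤ (tilePos w j).1 ∧ (tilePos w j).1 < rowLen w (tilePos w j).2 := by
  obtain ⟨I, J, h1, h2, h3, h4, h5, h6⟩ := row_spec w _ (tilePos_snd_lt w j)
  have := (h4 j hj).1 rfl
  have := tilePos_add w j hj
  omega

theorem tilePos_of_mem_row (w : List Bool) (x y : ℕ) (hy : y < snakeHeight w)
    (h : rowMin w y ≤ x) (h' : x < rowLen w y) :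
    x + y ≤ w.length ∧ tilePos w (x + y) = (x, y) := by
  obtain ⟨I, J, h1, h2, h3, h4, h5, h6⟩ := row_spec w y hy
  have hl : x + y ≤ w.length := by omega
  have h7 := (h4 (x + y) hl).2 (by omega)
  have := tilePos_add w _ hl
  exact ⟨hl, Prod.ext (by simp only; omega) h7⟩

/-- The last tile of a row lies directly below the first tile of the next row. -/
theorem row_junction (w : List Bool) (y : ℕ) (hy : y + 1 < snakeHeight w) :
    ∃ j < w.length, w.getD j false = true ∧
      tilePos w j = (rowMin w (y + 1), y) ∧ tilePos w (j + 1) = (rowMin w (y + 1), y + 1) ∧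
      rowLen w y = rowMin w (y + 1) + 1 := by
  have hlt := rowMin_lt_rowLen w y (by omega)
  have hlt' := rowMin_lt_rowLen w (y + 1) hy
  obtain ⟨hl, ht⟩ := tilePos_of_mem_row w (rowLen w y - 1) y (by omega) (by omega) (by omega)
  set j := rowLen w y - 1 + y
  have hn := tilePos_length_snd w
  have hj : j < w.length := by
    refine lt_of_le_of_ne hl fun h => ?_
    rw [← h, ht] at hn
    simp only at hn
    omega
  have hrow := tilePos_fst_mem_row w (j + 1) hj
  rcases tilePos_succ w j hj with ⟨hb, h⟩ | ⟨hb, h⟩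
  · rw [h, ht] at hrow
    simp only at hrow
    omega
  · rw [h, ht] at hrow
    simp only at hrow
    have key : rowMin w (y + 1) = rowLen w y - 1 := by
      by_contra hne
      obtain ⟨-, ht'⟩ := tilePos_of_mem_row w (rowLen w y - 2) (y + 1) hy (by omega) (by omega)
      rw [show rowLen w y - 2 + (y + 1) = j by omega, ht] at ht'
      simp at ht'
    refine ⟨j, hj, hb, ?_, ?_, by omega⟩
    · rw [ht, key]
    · rw [h, ht, key]

/-- `A` is an order ideal of the fence poset on the tiles of the snake graph of `w`. -/
def IsTileIdeal (w : List Bool) (A : Finset ℕ) : Prop :=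
  ∀ j < w.length, (w.getD j false = false → j + 1 ∈ A → j ∈ A) ∧
    (w.getD j false = true → j ∈ A → j + 1 ∈ A)

noncomputable def tileIdeals (w : List Bool) : Finset (Finset ℕ) :=
  (Finset.range (w.length + 1)).powerset.filter (IsTileIdeal w)

theorem mem_tileIdeals {w : List Bool} {A : Finset ℕ} :
    A ∈ tileIdeals w ↔ (∀ j ∈ A, j ≤ w.length) ∧ IsTileIdeal w A := by
  simp [tileIdeals, Finset.subset_iff]

/-- The length of the row at height `y` of the partition attached to a set of tiles. -/
def idealRow (w : List Bool) (A : Finset ℕ) (y : ℕ) : ℕ :=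
  rowMin w y + (A.filter fun j => (tilePos w j).2 = y).card

theorem mem_iff_lt_idealRow (w : List Bool) (A : Finset ℕ) (hA : A ∈ tileIdeals w)
    (j : ℕ) (hj : j ≤ w.length) :
    j ∈ A ↔ (tilePos w j).1 < idealRow w A (tilePos w j).2 := by
  obtain ⟨hsub, hid⟩ := mem_tileIdeals.1 hA
  have hadd := tilePos_add w j hj
  have hrow := tilePos_fst_mem_row w j hj
  have hy := tilePos_snd_lt w j
  rcases hp : tilePos w j with ⟨x, y⟩
  rw [hp] at hadd hrow hy
  simp only at *
  have hstep : ∀ x', rowMin w y ≤ x' → x' + 1 < rowLen w y → x' + 1 + y ∈ A → x' + y ∈ A := by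
    intro x' h1 h2 h3
    obtain ⟨hl, ht⟩ := tilePos_of_mem_row w x' y hy h1 (by omega)
    obtain ⟨hl', ht'⟩ := tilePos_of_mem_row w (x' + 1) y hy (by omega) h2
    have h4 : x' + 1 + y = x' + y + 1 := by omega
    rw [h4] at ht' hl' h3
    rcases tilePos_succ w (x' + y) (by omega) with ⟨hb, h⟩ | ⟨hb, h⟩
    · exact (hid _ (by omega)).1 hb h3
    · rw [ht', ht] at h
      simp at h
  have hdown : ∀ d x', rowMin w y ≤ x' → x' + d < rowLen w y → x' + d + y ∈ A → x' + y ∈ A := by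
    intro d
    induction d with
    | zero => intro x' _ _ h; simpa using h
    | succ d ih =>
      intro x' h1 h2 h3
      exact ih x' h1 (by omega) (hstep (x' + d) (by omega) (by omega) (by convert h3 using 1; ring))
  have hmem : ∀ i, i ∈ A.filter (fun j => (tilePos w j).2 = y) → rowMin w y ≤ i - y ∧
      i - y < rowLen w y ∧ i - y + y = i := by
    intro i hi
    obtain ⟨hi1, hi2⟩ := Finset.mem_filter.1 hi
    have h1 := tilePos_fst_mem_row w i (hsub i hi1)
    have h2 := tilePos_add w i (hsub i hi1)
    rw [hi2] at h1 h2
    rw [← h2]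
    simpa using h1
  unfold idealRow
  constructor
  · intro hjA
    have : (Finset.Icc (rowMin w y) x).image (· + y) ⊆ A.filter fun j => (tilePos w j).2 = y := by
      intro i hi
      obtain ⟨x', hx', rfl⟩ := Finset.mem_image.1 hi
      rw [Finset.mem_Icc] at hx'
      refine Finset.mem_filter.2 ⟨hdown (x - x') x' hx'.1 (by omega) ?_, ?_⟩
      · convert hjA using 1
        omega
      · rw [(tilePos_of_mem_row w x' y hy hx'.1 (by omega)).2]
    have := Finset.card_le_card this
    rw [Finset.card_image_of_injective _ (add_left_injective y), Nat.card_Icc] at this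
    omega
  · intro hlt
    by_contra hjA
    have : (A.filter fun j => (tilePos w j).2 = y) ⊆ (Finset.Ico (rowMin w y) x).image (· + y) := by
      intro i hi
      obtain ⟨h1, h2, h3⟩ := hmem i hi
      refine Finset.mem_image.2 ⟨i - y, Finset.mem_Ico.2 ⟨h1, ?_⟩, h3⟩
      by_contra hle
      apply hjA
      have := hdown (i - y - x) x hrow.1 (by omega) (by
        rw [show x + (i - y - x) + y = i by omega]
        exact (Finset.mem_filter.1 hi).1)
      rwa [hadd] at this
    have := Finset.card_le_card this
    rw [Finset.card_image_of_injective _ (add_left_injective y), Nat.card_Ico] at this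
    omega

theorem idealRow_le (w : List Bool) (A : Finset ℕ) (hA : A ∈ tileIdeals w) (y : ℕ)
    (hy : y < snakeHeight w) : idealRow w A y ≤ rowLen w y := by
  have hsub := (mem_tileIdeals.1 hA).1
  have h1 := rowMin_lt_rowLen w y hy
  have h2 : (A.filter fun j => (tilePos w j).2 = y).card ≤
      ((Finset.range (w.length + 1)).filter fun j => (tilePos w j).2 = y).card :=
    Finset.card_le_card (Finset.filter_subset_filter _ fun j hj =>
      Finset.mem_range.2 (Nat.lt_succ_of_le (hsub j hj)))
  have h3 : rowMin w y = rowLen w y -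
    ((Finset.range (w.length + 1)).filter fun j => (tilePos w j).2 = y).card := rfl
  have h4 : ((Finset.range (w.length + 1)).filter fun j => (tilePos w j).2 = y).card
      ≤ rowLen w y := by
    obtain ⟨I, J, a1, a2, a3, a4, a5, a6⟩ := row_spec w y hy
    have : ((Finset.range (w.length + 1)).filter fun j => (tilePos w j).2 = y)
        ⊆ Finset.Icc I J := by
      intro j hj
      simp only [Finset.mem_filter, Finset.mem_range, Nat.lt_succ_iff] at hj
      exact Finset.mem_Icc.2 ((a4 j hj.1).1 hj.2)
    have := Finset.card_le_card this
    rw [Nat.card_Icc] at this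
    omega
  unfold idealRow
  omega

theorem idealRow_le_succ (w : List Bool) (A : Finset ℕ) (hA : A ∈ tileIdeals w) (y : ℕ)
    (hy : y + 1 < snakeHeight w) : idealRow w A y ≤ idealRow w A (y + 1) := by
  obtain ⟨j, hj, hb, h1, h2, h3⟩ := row_junction w y hy
  have a1 := mem_iff_lt_idealRow w A hA j hj.le
  have a2 := mem_iff_lt_idealRow w A hA (j + 1) hj
  have a3 := ((mem_tileIdeals.1 hA).2 j hj).2 hb
  have a4 := idealRow_le w A hA y (by omega)
  have a5 : rowMin w (y + 1) ≤ idealRow w A (y + 1) := Nat.le_add_right _ _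
  rw [h1] at a1
  rw [h2] at a2
  simp only at a1 a2
  by_cases h : rowMin w (y + 1) < idealRow w A y
  · have := a2.1 (a3 (a1.2 h))
    omega
  · omega

/-- The interval `[μ, λ]` in Young's lattice. -/
abbrev YoungInterval (w : List Bool) : Type :=
  {ν : ℕ → ℕ // Antitone ν ∧ ∀ y, muPart w y ≤ ν y ∧ ν y ≤ lamPart w y}

noncomputable def idealToPartition (w : List Bool) (A : {A // A ∈ tileIdeals w}) :
    YoungInterval w := by
  refine ⟨fun y => if y < snakeHeight w then idealRow w A.1 (snakeHeight w - 1 - y) else 0, ?_, ?_⟩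
  · refine antitone_nat_of_succ_le fun k => ?_
    by_cases hk : k + 1 < snakeHeight w
    · have := idealRow_le_succ w A.1 A.2 (snakeHeight w - 1 - (k + 1)) (by omega)
      rw [show snakeHeight w - 1 - (k + 1) + 1 = snakeHeight w - 1 - k by omega] at this
      simpa [hk, show k < snakeHeight w by omega] using this
    · simp [hk]
  · intro y
    by_cases hy : y < snakeHeight w
    · simp only [muPart, lamPart, hy, if_true]
      exact ⟨Nat.le_add_right _ _, idealRow_le w A.1 A.2 _ (by omega)⟩
    · simp [muPart, lamPart, hy]

theorem idealToPartition_le_iff (w : List Bool) (A B : {A // A ∈ tileIdeals w}) :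
    (∀ y, (idealToPartition w A).1 y ≤ (idealToPartition w B).1 y) ↔ A.1 ⊆ B.1 := by
  simp only [idealToPartition]
  constructor
  · intro h j hj
    have hjl := (mem_tileIdeals.1 A.2).1 j hj
    have hy := tilePos_snd_lt w j
    have := h (snakeHeight w - 1 - (tilePos w j).2)
    rw [if_pos (by omega), if_pos (by omega),
      show snakeHeight w - 1 - (snakeHeight w - 1 - (tilePos w j).2) = (tilePos w j).2 by omega]
      at this
    rw [mem_iff_lt_idealRow w B.1 B.2 j hjl]
    exact lt_of_lt_of_le ((mem_iff_lt_idealRow w A.1 A.2 j hjl).1 hj) this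
  · intro h y
    split_ifs
    · exact Nat.add_le_add_left (Finset.card_le_card (Finset.filter_subset_filter _ h)) _
    · exact le_rfl

theorem idealToPartition_bijective (w : List Bool) : Function.Bijective (idealToPartition w) := by
  constructor
  · intro A B h
    exact Subtype.ext (Finset.Subset.antisymm
      ((idealToPartition_le_iff w A B).1 fun y => by rw [h])
      ((idealToPartition_le_iff w B A).1 fun y => by rw [h]))
  · rintro ⟨ν, hanti, hν⟩
    let A := (Finset.range (w.length + 1)).filter fun j =>
      (tilePos w j).1 < ν (snakeHeight w - 1 - (tilePos w j).2)
    have hmem : ∀ j, j ∈ A ↔ j ≤ w.length ∧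
        (tilePos w j).1 < ν (snakeHeight w - 1 - (tilePos w j).2) := by
      intro j
      simp [A]
    have hA : A ∈ tileIdeals w := by
      refine mem_tileIdeals.2 ⟨fun j hj => ((hmem j).1 hj).1, fun j hj => ?_⟩
      rw [hmem, hmem]
      rcases tilePos_succ w j hj with ⟨hb, h⟩ | ⟨hb, h⟩
      · simp only [hb, h, true_imp_iff, reduceCtorEq, false_imp_iff, and_true]
        intro h'
        exact ⟨hj.le, by omega⟩
      · simp only [hb, h, true_imp_iff, reduceCtorEq, false_imp_iff, true_and]
        intro h'
        exact ⟨hj, lt_of_lt_of_le h'.2 (hanti (by omega))⟩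
    refine ⟨⟨A, hA⟩, Subtype.ext (funext fun k => ?_)⟩
    simp only [idealToPartition]
    have hk := hν k
    unfold muPart lamPart at hk
    split_ifs at hk ⊢ with hlt
    · have hy : snakeHeight w - 1 - k < snakeHeight w := by omega
      obtain ⟨y, hyk⟩ : ∃ y, y = snakeHeight w - 1 - k := ⟨_, rfl⟩
      have hky : k = snakeHeight w - 1 - y := by omega
      rw [← hyk] at hk hy ⊢
      have : (A.filter fun j => (tilePos w j).2 = y) =
          (Finset.Ico (rowMin w y) (ν k)).image (· + y) := by
        ext j
        simp only [Finset.mem_filter, hmem, Finset.mem_image, Finset.mem_Ico]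
        constructor
        · rintro ⟨⟨h1, h2⟩, h3⟩
          rw [h3, ← hky] at h2
          have h4 := tilePos_fst_mem_row w j h1
          have h5 := tilePos_add w j h1
          rw [h3] at h4 h5
          exact ⟨_, ⟨h4.1, h2⟩, h5⟩
        · rintro ⟨x, ⟨h1, h2⟩, rfl⟩
          obtain ⟨h3, h4⟩ := tilePos_of_mem_row w x y hy h1 (by omega)
          simp only [h4, ← hky]
          exact ⟨⟨h3, h2⟩, trivial⟩
      rw [idealRow, this, Finset.card_image_of_injective _ (add_left_injective y), Nat.card_Ico]
      omega
    · omega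

theorem sum_idealToPartition (w : List Bool) (A : {A // A ∈ tileIdeals w}) :
    ∑ y ∈ Finset.range (snakeHeight w), (idealToPartition w A).1 y =
      ∑ y ∈ Finset.range (snakeHeight w), muPart w y + A.1.card := by
  have h1 : A.1.card = ∑ y ∈ Finset.range (snakeHeight w),
      (A.1.filter fun j => (tilePos w j).2 = y).card :=
    Finset.card_eq_sum_card_fiberwise fun j _ => by
      simpa using tilePos_snd_lt w j
  rw [h1, ← Finset.sum_range_reflect
    (fun y => (A.1.filter fun j => (tilePos w j).2 = y).card), ← Finset.sum_add_distrib]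
  refine Finset.sum_congr rfl fun y hy => ?_
  rw [Finset.mem_range] at hy
  simp only [idealToPartition, muPart, hy, if_true, idealRow]

theorem IsSnakePath.sum_eq {w : List Bool} {p : Fin (w.length + 3) → ℕ × ℕ}
    (hp : IsSnakePath w p) (i : ℕ) (hi : i < w.length + 3) :
    (p ⟨i, hi⟩).1 + (p ⟨i, hi⟩).2 = i := by
  induction i with
  | zero =>
    have := hp.1
    simp [show (⟨0, hi⟩ : Fin (w.length + 3)) = 0 from rfl, this]
  | succ i ih =>
    have h := ih (by omega)
    obtain ⟨j, -, ⟨h1, -⟩ | ⟨h1, -⟩⟩ := hp.2.2 ⟨i, by omega⟩ <;>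
    · simp only [Fin.succ_mk, Fin.castSucc_mk] at h1
      rw [h1]
      simp only
      omega

theorem IsSnakePath.corner {w : List Bool} {p : Fin (w.length + 3) → ℕ × ℕ}
    (hp : IsSnakePath w p) (j : ℕ) (hj : j ≤ w.length) :
    p ⟨j + 1, by omega⟩ = ((tilePos w j).1 + 1, (tilePos w j).2) ∨
    p ⟨j + 1, by omega⟩ = ((tilePos w j).1, (tilePos w j).2 + 1) := by
  have hs := hp.sum_eq j (by omega)
  obtain ⟨i, hi, h⟩ := hp.2.2 ⟨j, by omega⟩
  simp only [Fin.succ_mk, Fin.castSucc_mk] at h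
  have ha := tilePos_add w i hi
  rcases h with ⟨h1, h2 | h2⟩ | ⟨h1, h2 | h2⟩
  · rw [h2] at hs h1
    obtain rfl : i = j := by omega
    exact Or.inl h1
  · rw [h2] at hs h1
    obtain rfl : j = i + 1 := by simp only at hs; omega
    rw [h1]
    rcases tilePos_succ w i (by omega) with ⟨-, h⟩ | ⟨-, h⟩ <;> simp [h]
  · rw [h2] at hs h1
    obtain rfl : i = j := by omega
    exact Or.inr h1
  · rw [h2] at hs h1
    obtain rfl : j = i + 1 := by simp only at hs; omega
    rw [h1]
    rcases tilePos_succ w i (by omega) with ⟨-, h⟩ | ⟨-, h⟩ <;> simp [h]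

theorem IsSnakePath.step {w : List Bool} {p : Fin (w.length + 3) → ℕ × ℕ}
    (hp : IsSnakePath w p) (i : ℕ) (hi : i < w.length + 2) :
    p ⟨i + 1, by omega⟩ = ((p ⟨i, by omega⟩).1 + 1, (p ⟨i, by omega⟩).2) ∨
    p ⟨i + 1, by omega⟩ = ((p ⟨i, by omega⟩).1, (p ⟨i, by omega⟩).2 + 1) := by
  obtain ⟨j, -, ⟨h, -⟩ | ⟨h, -⟩⟩ := hp.2.2 ⟨i, hi⟩
  · exact Or.inl h
  · exact Or.inr h

theorem IsSnakePath.mono {w : List Bool} {p : Fin (w.length + 3) → ℕ × ℕ}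
    (hp : IsSnakePath w p) : Monotone p := by
  refine Fin.monotone_iff_le_succ.2 fun i => ?_
  obtain ⟨j, -, ⟨h, -⟩ | ⟨h, -⟩⟩ := hp.2.2 i <;>
  · rw [h, Prod.le_def]
    simp

theorem IsSnakePath.tileAbove_iff {w : List Bool} {p : Fin (w.length + 3) → ℕ × ℕ}
    (hp : IsSnakePath w p) (j : ℕ) (hj : j ≤ w.length) :
    TileAbove w p j ↔ p ⟨j + 1, by omega⟩ = ((tilePos w j).1 + 1, (tilePos w j).2) := by
  have hadd := tilePos_add w j hj
  constructor
  · rintro ⟨⟨i, hi⟩, y, hy, h1, h2⟩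
    simp only [Fin.succ_mk, Fin.castSucc_mk] at h1 h2
    have hs := hp.sum_eq i (by omega)
    rw [h1] at hs
    simp only at hs
    have hle : p ⟨i + 1, by omega⟩ ≤ p ⟨j + 1, by omega⟩ := hp.mono (by simp; omega)
    rcases hp.corner j hj with h | h
    · exact h
    · rw [h, h2, Prod.le_def] at hle
      simp at hle
  · intro h
    have hj1 : (tilePos w j).1 < (p ⟨j + 1, by omega⟩).1 := by
      rw [h]
      exact Nat.lt_succ_self _
    have hex : ∃ i, ∃ hi : i < w.length + 3, (tilePos w j).1 < (p ⟨i, hi⟩).1 :=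
      ⟨j + 1, _, hj1⟩
    obtain ⟨hk, hlt⟩ := Nat.find_spec hex
    have hle := Nat.find_min' hex ⟨_, hj1⟩
    have hmin : ∀ i, i < Nat.find hex → ∀ hi : i < w.length + 3,
        (p ⟨i, hi⟩).1 ≤ (tilePos w j).1 := fun i hi hi' =>
      not_lt.1 fun hc => Nat.find_min hex hi ⟨hi', hc⟩
    generalize Nat.find hex = k at *
    obtain ⟨i, rfl⟩ : ∃ i, k = i + 1 := by
      refine ⟨k - 1, (Nat.sub_add_cancel (Nat.pos_of_ne_zero ?_)).symm⟩
      rintro rfl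
      rw [show (⟨0, hk⟩ : Fin (w.length + 3)) = 0 from rfl, hp.1] at hlt
      simp at hlt
    have h1 := hmin i (by omega) (by omega)
    have hmono : p ⟨i, by omega⟩ ≤ p ⟨j + 1, by omega⟩ := hp.mono (by simp; omega)
    rw [h, Prod.le_def] at hmono
    rcases hp.step i (by omega) with h2 | h2
    · rw [h2] at hlt
      simp only at hlt
      have hx : (p ⟨i, by omega⟩).1 = (tilePos w j).1 := by omega
      exact ⟨⟨i, by omega⟩, _, hmono.2, Prod.ext hx rfl, by
        simp only [Fin.succ_mk]
        rw [h2, hx]⟩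
    · rw [h2] at hlt
      simp only at hlt
      omega

noncomputable def pathToIdeal (w : List Bool) (p : {p // IsSnakePath w p}) :
    {A // A ∈ tileIdeals w} := by
  refine ⟨(Finset.range (w.length + 1)).filter (TileAbove w p.1), mem_tileIdeals.2
    ⟨fun j hj => by simp at hj; omega, fun j hj => ?_⟩⟩
  simp only [Finset.mem_filter, Finset.mem_range, hj, Nat.lt_succ_of_le hj.le,
    Nat.add_lt_add_iff_right, true_and]
  rw [p.2.tileAbove_iff j hj.le, p.2.tileAbove_iff (j + 1) hj]
  have hs := p.2.step (j + 1) (by omega)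
  have hc := p.2.corner j hj.le
  have hc' := p.2.corner (j + 1) hj
  rcases tilePos_succ w j hj with ⟨hb, h⟩ | ⟨hb, h⟩ <;> rw [hb] <;> rw [h] at hc' ⊢ <;>
    simp only [Prod.ext_iff, reduceCtorEq, false_imp_iff, true_imp_iff, and_true, true_and]
      at hs hc hc' ⊢ <;> omega

theorem mem_pathToIdeal (w : List Bool) (p : {p // IsSnakePath w p}) (j : ℕ)
    (hj : j ≤ w.length) : j ∈ (pathToIdeal w p).1 ↔ TileAbove w p.1 j := by
  simp [pathToIdeal, hj]

theorem pathToIdeal_subset_iff (w : List Bool) (p p' : {p // IsSnakePath w p}) :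
    (pathToIdeal w p).1 ⊆ (pathToIdeal w p').1 ↔
      ∀ j ≤ w.length, TileAbove w p.1 j → TileAbove w p'.1 j := by
  constructor
  · intro h j hj
    rw [← mem_pathToIdeal w p j hj, ← mem_pathToIdeal w p' j hj]
    exact @h j
  · intro h j hj
    have hjl := (mem_tileIdeals.1 (pathToIdeal w p).2).1 j hj
    exact (mem_pathToIdeal w p' j hjl).2 (h j hjl ((mem_pathToIdeal w p j hjl).1 hj))

theorem pathToIdeal_injective (w : List Bool) : Function.Injective (pathToIdeal w) := by
  intro p p' h
  refine Subtype.ext (funext fun ⟨i, hi⟩ => ?_)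
  rcases i with _ | j
  · exact p.2.1.trans p'.2.1.symm
  · rcases Nat.lt_or_ge w.length j with hlt | hj
    · obtain rfl : j = w.length + 1 := by omega
      exact p.2.2.1.trans p'.2.2.1.symm
    · have hiff : TileAbove w p.1 j ↔ TileAbove w p'.1 j := by
        rw [← mem_pathToIdeal w p j hj, h, mem_pathToIdeal w p' j hj]
      rw [p.2.tileAbove_iff j hj, p'.2.tileAbove_iff j hj] at hiff
      rcases p.2.corner j hj with h1 | h1
      · rw [h1, hiff.1 h1]
      · rcases p'.2.corner j hj with h2 | h2
        · rw [h2, hiff.2 h2]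
        · rw [h1, h2]

/-- The lattice path with exactly the tiles of `A` above it. -/
noncomputable def idealPath (w : List Bool) (A : Finset ℕ) : ℕ → ℕ × ℕ
  | 0 => (0, 0)
  | j + 1 =>
    if w.length < j then ((tilePos w w.length).1 + 1, (tilePos w w.length).2 + 1)
    else if j ∈ A then ((tilePos w j).1 + 1, (tilePos w j).2)
    else ((tilePos w j).1, (tilePos w j).2 + 1)

theorem isSnakePath_idealPath (w : List Bool) (A : Finset ℕ) (hA : IsTileIdeal w A) :
    IsSnakePath w fun i => idealPath w A i := by
  refine ⟨rfl, by simp [idealPath], ?_⟩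
  rintro ⟨i, hi⟩
  simp only [Fin.succ_mk, Fin.castSucc_mk]
  rcases i with _ | j
  · refine ⟨0, by omega, ?_⟩
    by_cases h0 : 0 ∈ A <;> simp [idealPath, tilePos_zero, h0]
  · rcases Nat.lt_or_ge j w.length with hj | hj
    · have hid := hA j hj
      have e1 : ¬ w.length < j := by omega
      have e2 : ¬ w.length < j + 1 := by omega
      simp only [idealPath, e1, e2, if_false]
      rcases tilePos_succ w j hj with ⟨hb, h⟩ | ⟨hb, h⟩
      · by_cases h1 : j ∈ A
        · refine ⟨j + 1, hj, ?_⟩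
          by_cases h2 : j + 1 ∈ A <;> simp [h, h1, h2]
        · have h2 : j + 1 ∉ A := fun h2 => h1 (hid.1 hb h2)
          refine ⟨j, hj.le, ?_⟩
          simp [h, h1, h2]
      · by_cases h1 : j ∈ A
        · have h2 : j + 1 ∈ A := hid.2 hb h1
          refine ⟨j, hj.le, ?_⟩
          simp [h, h1, h2]
        · refine ⟨j + 1, hj, ?_⟩
          by_cases h2 : j + 1 ∈ A <;> simp [h, h1, h2]
    · obtain rfl : j = w.length := by omega
      refine ⟨w.length, le_rfl, ?_⟩
      by_cases h1 : w.length ∈ A <;> simp [idealPath, h1]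

theorem pathToIdeal_bijective (w : List Bool) : Function.Bijective (pathToIdeal w) := by
  refine ⟨pathToIdeal_injective w, fun A => ?_⟩
  obtain ⟨hsub, hid⟩ := mem_tileIdeals.1 A.2
  refine ⟨⟨_, isSnakePath_idealPath w A.1 hid⟩, Subtype.ext (Finset.ext fun j => ?_)⟩
  rcases Nat.lt_or_ge w.length j with hlt | hj
  · refine iff_of_false (fun h => ?_) fun h => ?_
    · have := (mem_tileIdeals.1 (pathToIdeal w _).2).1 j h
      omega
    · have := hsub j h
      omega
  · rw [mem_pathToIdeal w _ j hj, IsSnakePath.tileAbove_iff (isSnakePath_idealPath w A.1 hid) j hj]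
    by_cases h : j ∈ A.1 <;> simp [idealPath, h, not_lt.2 hj]

/-- The transfer map, adding a tile in front of a snake graph, on pairs of generating functions
(ideals containing the first tile, ideals avoiding it). -/
def tileStep {R : Type*} [CommSemiring R] (q : R) (b : Bool) (v : R × R) : R × R :=
  if b then (q * v.1, v.1 + v.2) else (q * (v.1 + v.2), v.2)

theorem sum_tileIdeals_foldr {R : Type*} [CommSemiring R] (q : R) (w : List Bool) (v : R × R) :
    ∑ A ∈ tileIdeals w, (∏ j ∈ Finset.range w.length, if j ∈ A then q else 1) *
      (if w.length ∈ A then v.1 else v.2) =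
    (w.foldr (tileStep q) v).1 + (w.foldr (tileStep q) v).2 := by
  induction w using List.reverseRecOn generalizing v with
  | nil =>
    have : tileIdeals [] = {∅, {0}} := by
      ext A
      simp [tileIdeals, IsTileIdeal, Finset.subset_singleton_iff]
    rw [this, Finset.sum_pair (by simp)]
    simp [add_comm]
  | append_singleton w b ih =>
    rw [List.foldr_append, List.foldr_cons, List.foldr_nil, ← ih, tileIdeals, tileIdeals,
      Finset.sum_filter, Finset.sum_filter, List.length_append, List.length_singleton,
      Finset.range_add_one (n := w.length + 1), Finset.sum_powerset_insert (by simp),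
      ← Finset.sum_add_distrib]
    refine Finset.sum_congr rfl fun A hA => ?_
    have hn : w.length + 1 ∉ A := fun h => by
      have := Finset.mem_range.1 (Finset.mem_powerset.1 hA h)
      omega
    have hg : ∀ j < w.length, (w ++ [b]).getD j false = w.getD j false := fun j hj =>
      List.getD_append _ _ _ _ hj
    have hgn : (w ++ [b]).getD w.length false = b := by simp
    have hsplit : ∀ B : Finset ℕ, IsTileIdeal (w ++ [b]) B ↔ IsTileIdeal w B ∧
        ((b = false → w.length + 1 ∈ B → w.length ∈ B) ∧
          (b = true → w.length ∈ B → w.length + 1 ∈ B)) := by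
      intro B
      unfold IsTileIdeal
      rw [List.length_append, List.length_singleton, Nat.forall_lt_succ_right, hgn]
      refine and_congr_left fun _ => forall₂_congr fun j hj => ?_
      rw [hg j hj]
    have hins : IsTileIdeal w (insert (w.length + 1) A) ↔ IsTileIdeal w A := by
      refine forall₂_congr fun j hj => ?_
      simp [hj.ne, show j ≠ w.length + 1 by omega]
    have hprod : ∏ j ∈ Finset.range (w.length + 1),
        (if j ∈ insert (w.length + 1) A then q else 1) =
        ∏ j ∈ Finset.range (w.length + 1), if j ∈ A then q else 1 := by
      refine Finset.prod_congr rfl fun j hj => ?_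
      have : j ≠ w.length + 1 := (Finset.mem_range.1 hj).ne
      simp [this]
    rw [hprod, hsplit, hsplit, hins, Finset.prod_range_succ]
    by_cases hi : IsTileIdeal w A <;> by_cases hA' : w.length ∈ A <;> cases b <;>
      simp [hi, hA', hn, tileStep] <;> ring

theorem sum_tileIdeals_card {R : Type*} [CommSemiring R] (q : R) (w : List Bool) :
    ∑ A ∈ tileIdeals w, q ^ A.card =
      (w.foldr (tileStep q) (q, 1)).1 + (w.foldr (tileStep q) (q, 1)).2 := by
  rw [← sum_tileIdeals_foldr]
  refine Finset.sum_congr rfl fun A hA => ?_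
  have hsub := (mem_tileIdeals.1 hA).1
  simp only
  rw [← Finset.prod_range_succ (fun j => if j ∈ A then q else 1), Finset.prod_ite,
    Finset.prod_const, Finset.prod_const_one, mul_one]
  congr 2
  ext j
  simp only [Finset.mem_filter, Finset.mem_range]
  exact ⟨fun h => ⟨Nat.lt_succ_of_le (hsub j h), h⟩, fun h => h.2⟩

open Polynomial in
theorem foldr_tileStep_invariant (w : List Bool) :
    let v := w.foldr (tileStep (X : ℚ[X])) (X, 1)
    v.1.Monic ∧ v.2.Monic ∧ v.2.degree < v.1.degree ∧ v.1.eval 0 = 0 ∧ v.2.eval 0 = 1 ∧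
      IsCoprime v.1 v.2 := by
  induction w with
  | nil => simp [monic_X, monic_one, degree_X, isCoprime_one_right]
  | cons b w ih =>
    simp only [List.foldr_cons] at ih ⊢
    obtain ⟨h1, h2, h3, h4, h5, h6⟩ := ih
    generalize w.foldr (tileStep (X : ℚ[X])) (X, 1) = v at *
    have hm : (v.1 + v.2).Monic := h1.add_of_left h3
    have hd : (v.1 + v.2).degree = v.1.degree := degree_add_eq_left_of_degree_lt h3
    have hne : v.1.degree ≠ ⊥ := degree_ne_bot.2 h1.ne_zero
    have hlt : v.1.degree < (X * v.1).degree := by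
      rw [degree_mul, degree_X, degree_eq_natDegree h1.ne_zero]
      exact_mod_cast Nat.lt_one_add_iff.2 le_rfl
    have hX : ∀ f : ℚ[X], f.eval 0 = 1 → IsCoprime X f := by
      intro f hf
      refine ((irreducible_X).coprime_iff_not_dvd).2 fun hdvd => ?_
      rw [X_dvd_iff, coeff_zero_eq_eval_zero, hf] at hdvd
      exact one_ne_zero hdvd
    have h0 : (v.1 + v.2).eval 0 = 1 := by simp [h4, h5]
    cases b
    · simp only [tileStep, Bool.false_eq_true, if_false]
      refine ⟨monic_X.mul hm, h2, ?_, by simp, h5, ?_⟩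
      · rw [degree_mul, hd, ← degree_mul]
        exact h3.trans hlt
      · exact (hX _ h5).mul_left (by simpa using h6.add_mul_left_left 1)
    · simp only [tileStep, if_true]
      refine ⟨monic_X.mul h1, hm, by rwa [hd], by simp, h0, ?_⟩
      exact (hX _ h0).mul_left (by simpa [add_comm] using h6.add_mul_left_right 1)

theorem RatFunc.num_div_of_isCoprime {K : Type*} [Field K] {p q : Polynomial K}
    (hq : q.Monic) (h : IsCoprime p q) :
    (algebraMap _ (RatFunc K) p / algebraMap _ (RatFunc K) q).num = p := by
  have hg : gcd p q = 1 := by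
    rw [← normalize_gcd, normalize_eq_one]
    exact (gcd_isUnit_iff p q).2 h
  rw [RatFunc.num_div, hg]
  simp [hq.leadingCoeff]

/-- Blocks of lengths `l`, with alternating letters starting with `b`. -/
def altWord : Bool → List ℕ → List Bool
  | _, [] => []
  | b, x :: l => List.replicate x b ++ altWord (!b) l

theorem altWord_eq_flatMap (b : Bool) (l : List ℕ) :
    altWord b l = (List.range l.length).flatMap fun i =>
      List.replicate (l.getD i 0) (b ^^ (i % 2 == 1)) := by
  induction l generalizing b with
  | nil => rfl
  | cons x l ih =>
    rw [altWord, ih, List.length_cons, List.range_succ_eq_map, List.flatMap_cons,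
      List.flatMap_map]
    congr 1
    · simp
    · congr 1
      funext i
      rcases Nat.mod_two_eq_zero_or_one i with h | h <;>
        simp [h, Nat.succ_eq_add_one, Nat.add_mod]

theorem cons_snakeWord_append (a : List ℕ) (hlen : 2 ≤ a.length) (heven : a.length % 2 = 0)
    (hpos : ∀ x ∈ a, 1 ≤ x) : false :: (snakeWord a ++ [true]) = altWord false a := by
  obtain ⟨k, hk⟩ : ∃ k, a.length = k + 1 + 1 := ⟨a.length - 2, by omega⟩
  have hget : ∀ i < a.length, 1 ≤ a.getD i 0 := by
    intro i hi
    rw [List.getD_eq_getElem _ _ hi]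
    exact hpos _ (List.getElem_mem hi)
  have h0 := hget 0 (by omega)
  have h1 := hget (k + 1) (by omega)
  rw [altWord_eq_flatMap, snakeWord, hk, List.range_succ, List.range_succ_eq_map]
  simp only [List.cons_append, List.flatMap_cons, List.flatMap_append, List.flatMap_nil,
    List.append_nil, List.append_assoc]
  rw [← List.cons_append]
  congr 1
  · obtain ⟨c, hc⟩ : ∃ c, a.getD 0 0 = c + 1 := ⟨a.getD 0 0 - 1, by omega⟩
    rw [hc]
    simp [List.replicate_succ]
  · congr 1
    · rw [List.flatMap_map, List.flatMap_map]
      refine List.flatMap_congr fun i hi => ?_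
      have := List.mem_range.1 hi
      rw [if_neg (by omega)]
      simp
    · obtain ⟨c, hc⟩ : ∃ c, a.getD (k + 1) 0 = c + 1 := ⟨a.getD (k + 1) 0 - 1, by omega⟩
      have hodd : (k + 1) % 2 = 1 := by omega
      rw [if_pos (by omega), hc, hodd]
      simp [List.replicate_succ']

theorem foldr_replicate_false {R : Type*} [CommSemiring R] (q : R) (k : ℕ) (v : R × R) :
    (List.replicate k false).foldr (tileStep q) v =
      (q ^ k * v.1 + q * (∑ i ∈ Finset.range k, q ^ i) * v.2, v.2) := by
  induction k with
  | zero => simp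
  | succ k ih =>
    rw [List.replicate_succ, List.foldr_cons, ih, tileStep, Finset.sum_range_succ',
      Finset.sum_congr rfl fun i _ => pow_succ' q i, ← Finset.mul_sum]
    ext
    · simp only [Bool.false_eq_true, if_false]
      ring
    · rfl

theorem foldr_replicate_true {R : Type*} [CommSemiring R] (q : R) (k : ℕ) (v : R × R) :
    (List.replicate k true).foldr (tileStep q) v =
      (q ^ k * v.1, (∑ i ∈ Finset.range k, q ^ i) * v.1 + v.2) := by
  induction k with
  | zero => simp
  | succ k ih =>
    rw [List.replicate_succ, List.foldr_cons, ih, tileStep, Finset.sum_range_succ]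
    ext <;> simp only [if_true] <;> ring

theorem mul_sum_pow_inv {K : Type*} [Field K] (q : K) (hq : q ≠ 0) (k : ℕ) :
    q ^ k * ∑ i ∈ Finset.range k, q⁻¹ ^ i = q * ∑ i ∈ Finset.range k, q ^ i := by
  induction k with
  | zero => simp
  | succ k ih =>
    have h : q ^ k * q⁻¹ ^ k = 1 := by rw [← mul_pow, mul_inv_cancel₀ hq, one_pow]
    rw [Finset.sum_range_succ, mul_add, pow_succ', mul_assoc, ih, mul_assoc, h,
      Finset.sum_range_succ', Finset.sum_congr rfl fun i _ => pow_succ' q i, ← Finset.mul_sum]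
    ring

theorem map_foldr_tileStep {R S : Type*} [CommSemiring R] [CommSemiring S] (f : R →+* S) (q : R)
    (w : List Bool) (v : R × R) :
    Prod.map f f (w.foldr (tileStep q) v) = w.foldr (tileStep (f q)) (Prod.map f f v) := by
  induction w with
  | nil => rfl
  | cons b w ih =>
    rw [List.foldr_cons, List.foldr_cons, ← ih]
    cases b <;> simp [tileStep]

theorem foldr_tileStep_one_pos (w : List Bool) :
    let v := w.foldr (tileStep (1 : ℚ)) (1, 0)
    0 < v.1 ∧ 0 ≤ v.2 ∧ (true ∈ w → 0 < v.2) := by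
  induction w with
  | nil => simp
  | cons b w ih =>
    simp only [List.foldr_cons] at ih ⊢
    obtain ⟨h1, h2, h3⟩ := ih
    cases b
    · simp only [tileStep, Bool.false_eq_true, if_false, one_mul]
      exact ⟨by linarith, h2, fun h => h3 (by simpa using h)⟩
    · simp only [tileStep, if_true, one_mul]
      exact ⟨h1, by linarith, fun _ => by linarith⟩

theorem foldr_tileStep_ne_zero (w : List Bool) :
    let v := w.foldr (tileStep (RatFunc.X : RatFunc ℚ)) (1, 0)
    v.1 ≠ 0 ∧ (true ∈ w → v.2 ≠ 0) := by
  have hr := map_foldr_tileStep (algebraMap (Polynomial ℚ) (RatFunc ℚ)) Polynomial.X w (1, 0)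
  have he := map_foldr_tileStep (Polynomial.evalRingHom (1 : ℚ)) Polynomial.X w (1, 0)
  have hpos := foldr_tileStep_one_pos w
  simp only [Prod.map_apply, map_one, map_zero, RatFunc.algebraMap_X,
    Polynomial.coe_evalRingHom, Polynomial.eval_X, Polynomial.eval_one, Polynomial.eval_zero]
    at hr he hpos ⊢
  rw [← hr]
  rw [← he] at hpos
  obtain ⟨h1, -, h3⟩ := hpos
  simp only [Prod.map_fst, Prod.map_snd] at h1 h3 ⊢
  refine ⟨fun h => h1.ne' ?_, fun ht h => (h3 ht).ne' ?_⟩ <;>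
  · rw [(map_eq_zero_iff _ (RatFunc.algebraMap_injective ℚ)).1 h]
    simp

theorem qCF_eq_foldr (l : List ℕ) (b : Bool) (hl : l ≠ [])
    (hlen : l.length % 2 = if b then 1 else 0) (hpos : ∀ x ∈ l, 1 ≤ x) :
    let v := (altWord b l).foldr (tileStep (RatFunc.X : RatFunc ℚ)) (1, 0)
    if b then qCF RatFunc.X⁻¹ l = RatFunc.X * v.2 / v.1
    else qCF RatFunc.X l = v.1 / (RatFunc.X * v.2) := by
  have hX : (RatFunc.X : RatFunc ℚ) ≠ 0 := RatFunc.X_ne_zero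
  induction l generalizing b with
  | nil => exact absurd rfl hl
  | cons x l ih =>
    have hXx : (RatFunc.X : RatFunc ℚ) ^ x ≠ 0 := pow_ne_zero _ hX
    have hsum := mul_sum_pow_inv (RatFunc.X : RatFunc ℚ) hX x
    rcases l with _ | ⟨y, l⟩
    · cases b
      · simp at hlen
      · simp only [if_true, altWord, List.append_nil, qCF, foldr_replicate_true]
        rw [mul_one, mul_one, add_zero, ← hsum, mul_div_cancel_left₀ _ hXx]
    · have ih' := ih (!b) (by simp) (by cases b <;> simp at hlen ⊢ <;> omega)
        fun z hz => hpos z (List.mem_cons_of_mem _ hz)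
      have hne := foldr_tileStep_ne_zero (altWord (!b) (y :: l))
      have hmem : true ∈ altWord true (y :: l) := by
        have := hpos y (by simp)
        simp only [altWord, List.mem_append, List.mem_replicate]
        exact Or.inl ⟨by omega, trivial⟩
      rw [altWord, List.foldr_append]
      simp only at ih' hne ⊢
      cases b
      · obtain ⟨h1, h2⟩ := hne
        have h2' := h2 hmem
        simp only [Bool.not_false, if_true] at ih' h1 h2'
        simp only [Bool.not_false, Bool.false_eq_true, if_false, qCF, foldr_replicate_false]
        rw [ih']
        field_simp
        ring
      · have h1 := hne.1
        simp only [Bool.not_true, Bool.false_eq_true, if_false] at ih' h1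
        simp only [Bool.not_true, if_true, qCF, foldr_replicate_true, inv_inv]
        rw [ih', eq_div_iff (mul_ne_zero hXx h1), mul_add,
          ← mul_assoc RatFunc.X, ← hsum, inv_pow]
        field_simp

theorem num_qCF (a : List ℕ) (hlen : 2 ≤ a.length) (heven : a.length % 2 = 0)
    (hpos : ∀ x ∈ a, 1 ≤ x) :
    (qCF RatFunc.X a).num =
      ∑ A ∈ tileIdeals (snakeWord a), (Polynomial.X : Polynomial ℚ) ^ A.card := by
  have hX : (RatFunc.X : RatFunc ℚ) ≠ 0 := RatFunc.X_ne_zero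
  have hq := qCF_eq_foldr a false (by rintro rfl; simp at hlen) (by simpa using heven) hpos
  have hr := map_foldr_tileStep (algebraMap (Polynomial ℚ) (RatFunc ℚ)) Polynomial.X
    (snakeWord a) (Polynomial.X, 1)
  obtain ⟨-, hm, -, -, -, hc⟩ := foldr_tileStep_invariant (snakeWord a)
  rw [sum_tileIdeals_card]
  simp only [Prod.map_apply, map_one, RatFunc.algebraMap_X] at hr
  generalize (snakeWord a).foldr (tileStep (Polynomial.X : Polynomial ℚ)) (Polynomial.X, 1) = v
    at *
  have hv : (altWord false a).foldr (tileStep (RatFunc.X : RatFunc ℚ)) (1, 0) =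
      tileStep RatFunc.X false (Prod.map (algebraMap _ _) (algebraMap _ _) v) := by
    rw [← cons_snakeWord_append a hlen heven hpos, List.foldr_cons, List.foldr_append, hr]
    simp [tileStep]
  rw [hv] at hq
  simp only [tileStep, Bool.false_eq_true, if_false, Prod.map_fst, Prod.map_snd] at hq
  rw [hq, mul_div_mul_left _ _ hX, ← map_add]
  exact RatFunc.num_div_of_isCoprime hm (by simpa [add_comm] using hc.add_mul_left_left 1)

/-- The poset of monotone lattice paths on the snake graph `G(r/s)`
(ordered by containment of the sets of tiles above the path) is isomorphic to the
interval `[μ, λ]` in Young's lattice (partitions `ν` with `μ ≤ ν ≤ λ`, ordered by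
containment), where `λ = λ(r/s)`, `μ = μ(r/s)`; consequently
`q^{|μ|} R(q) = ∑_{μ ≤ ν ≤ λ} q^{|ν|}` where `R(q)` is the numerator of `[r/s]_q`. -/
theorem snake_paths_orderIso_young_interval
    (m : ℕ) (hm : 0 < m) (a : List ℕ) (hlen : a.length = 2 * m)
    (hpos : ∀ x ∈ a, 1 ≤ x) :
    (∃ e : {p : Fin ((snakeWord a).length + 3) → ℕ × ℕ // IsSnakePath (snakeWord a) p} ≃
        {ν : ℕ → ℕ // Antitone ν ∧
          ∀ y, muPart (snakeWord a) y ≤ ν y ∧ ν y ≤ lamPart (snakeWord a) y},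
      ∀ p p', (∀ j ≤ (snakeWord a).length,
          TileAbove (snakeWord a) p.1 j → TileAbove (snakeWord a) p'.1 j) ↔
        ∀ y, (e p).1 y ≤ (e p').1 y) ∧
    ∑ᶠ ν : {ν : ℕ → ℕ // Antitone ν ∧
        ∀ y, muPart (snakeWord a) y ≤ ν y ∧ ν y ≤ lamPart (snakeWord a) y},
      (Polynomial.X : Polynomial ℚ) ^ (∑ y ∈ Finset.range (snakeHeight (snakeWord a)), ν.1 y) =
    (Polynomial.X : Polynomial ℚ) ^
        (∑ y ∈ Finset.range (snakeHeight (snakeWord a)), muPart (snakeWord a) y) *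
      (qCF RatFunc.X a).num := by
  set w := snakeWord a
  let E := Equiv.ofBijective _ (idealToPartition_bijective w)
  let F := Equiv.ofBijective _ (pathToIdeal_bijective w)
  refine ⟨⟨F.trans E, fun p p' => ?_⟩, ?_⟩
  · rw [← pathToIdeal_subset_iff w p p']
    exact (idealToPartition_le_iff w (F p) (F p')).symm
  · rw [num_qCF a (by omega) (by omega) hpos, Finset.mul_sum, ← Finset.sum_coe_sort,
      ← finsum_eq_sum_of_fintype]
    refine (finsum_eq_of_bijective _ (idealToPartition_bijective w) fun A => ?_).symm
    rw [sum_idealToPartition, pow_add]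
end

section
/- Let r/s = [a_1,…,a_{2m}], n = ∑_{i=1}^{2m} a_i, k = ∑_{i=1}^m a_{2i}, and let λ = λ(r/s), μ = μ(r/s) be the partitions associated to the snake graph of r/s. Then the number of F_q-points of the union of open Schubert cells ⋃_{μ ≤ ν ≤ λ} Ω°_ν in Gr_k(F_q^n) equals q^{|μ|} · R(q), where R(q) is the numerator of the q-rational [r/s]_q. -/
/-- The linear map `K^n → K^n` keeping the first `j` coordinates and zeroing the rest. -/
noncomputable def truncMap (K : Type) [Field K] (n j : ℕ) :
    (Fin n → K) →ₗ[K] (Fin n → K) :=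
  LinearMap.pi fun i => if (i : ℕ) < j then LinearMap.proj i else 0

/-- Column `j` is a pivot column of the row-echelon representative of `W ⊆ K^n`. -/
def IsPivot {K : Type} [Field K] {n : ℕ} (W : Submodule K (Fin n → K)) (j : ℕ) : Prop :=
  Module.finrank K (W.map (truncMap K n (j + 1))) =
    Module.finrank K (W.map (truncMap K n j)) + 1

section Echelon

variable {K : Type} [Field K] {n : ℕ}

/-- Some vector of `W` has its first nonzero coordinate in position `j`. -/
def IsLeading (W : Submodule K (Fin n → K)) (j : Fin n) : Prop :=
  ∃ x ∈ W, (∀ i < j, x i = 0) ∧ x j ≠ 0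

lemma truncMap_apply (j : ℕ) (x : Fin n → K) (i : Fin n) :
    truncMap K n j x i = if (i : ℕ) < j then x i else 0 := by
  unfold truncMap
  rw [LinearMap.pi_apply]
  split_ifs <;> simp

lemma not_isPivot_of_le (W : Submodule K (Fin n → K)) {j : ℕ} (hj : n ≤ j) : ¬ IsPivot W j := by
  have h : truncMap K n (j + 1) = truncMap K n j := by
    refine LinearMap.ext fun x => funext fun i => ?_
    simp only [truncMap_apply]
    rw [if_pos (by omega), if_pos (by omega)]
  rw [IsPivot, h]
  omega

lemma isPivot_iff_isLeading (W : Submodule K (Fin n → K)) (j : Fin n) :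
    IsPivot W j ↔ IsLeading W j := by
  set U := W.map (truncMap K n (j + 1)) with hU
  have hcomp : (truncMap K n j).comp (truncMap K n (j + 1)) = truncMap K n j := by
    refine LinearMap.ext fun x => funext fun i => ?_
    simp only [LinearMap.comp_apply, truncMap_apply]
    split_ifs <;> first | rfl | omega
  have hmap : W.map (truncMap K n j) = LinearMap.range ((truncMap K n j).domRestrict U) := by
    rw [LinearMap.range_domRestrict, hU, ← Submodule.map_comp, hcomp]
  have hrank := LinearMap.finrank_range_add_finrank_ker ((truncMap K n j).domRestrict U)
  set N := LinearMap.ker ((truncMap K n j).domRestrict U) with hN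
  have hzero : ∀ u : N, ∀ i, i ≠ j → (u : U).1 i = 0 := by
    rintro ⟨⟨u, hu⟩, hker⟩ i hij
    obtain ⟨x, hx, rfl⟩ := hu
    have h0 := congrFun (LinearMap.mem_ker.1 hker) i
    simp only [LinearMap.domRestrict_apply, truncMap_apply, Pi.zero_apply] at h0
    simp only [truncMap_apply]
    have hij' : (i : ℕ) ≠ j := fun h => hij (Fin.ext h)
    split_ifs at h0 ⊢ <;> first | rfl | exact h0 | omega
  let φ : N →ₗ[K] K := (LinearMap.proj j).comp (U.subtype.comp N.subtype)
  have hφ : Function.Injective φ := by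
    intro u v huv
    refine Subtype.ext (Subtype.ext (funext fun i => ?_))
    by_cases hij : i = j
    · subst hij; exact huv
    · rw [hzero u i hij, hzero v i hij]
  have hle : Module.finrank K N ≤ 1 := by
    simpa using LinearMap.finrank_le_finrank_of_injective hφ
  have hpiv : IsPivot W j ↔ 0 < Module.finrank K N := by
    unfold IsPivot
    rw [hmap, ← hU]
    omega
  refine hpiv.trans ((Module.finrank_pos_iff_exists_ne_zero (R := K) (M := N)).trans ?_)
  constructor
  · rintro ⟨u, hu⟩
    have huj : (u : U).1 j ≠ 0 := fun h => hu (hφ (by rw [map_zero]; exact h))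
    have hu0 := hzero u
    obtain ⟨⟨v, x, hx, rfl⟩, hker⟩ := u
    refine ⟨x, hx, fun i hi => ?_, ?_⟩
    · have := hu0 i hi.ne
      simp only [truncMap_apply] at this
      rwa [if_pos (by have := Fin.lt_def.1 hi; omega)] at this
    · simpa [truncMap_apply] using huj
  · rintro ⟨x, hx, hlt, hj⟩
    refine ⟨⟨⟨truncMap K n (j + 1) x, x, hx, rfl⟩, ?_⟩, fun h => hj ?_⟩
    · rw [LinearMap.mem_ker]
      refine funext fun i => ?_
      simp only [LinearMap.domRestrict_apply, truncMap_apply, Pi.zero_apply]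
      split_ifs with h1 h2
      · exact hlt i h1
      all_goals rfl
    · have := congrFun (congrArg (fun u : N => (u : U).1) h) j
      simpa [truncMap_apply] using this

variable (I : Finset (Fin n))

lemma eq_zero_of_forall_isLeading {W : Submodule K (Fin n → K)}
    (hW : ∀ j, IsLeading W j → j ∈ I) {x : Fin n → K} (hx : x ∈ W)
    (h0 : ∀ i ∈ I, x i = 0) : x = 0 := by
  by_contra hne
  have hex : ∃ j, x j ≠ 0 := by
    by_contra! h
    exact hne (funext h)
  obtain ⟨j, hj, hmin⟩ := WellFounded.has_min (wellFounded_lt (α := Fin n)) {j | x j ≠ 0} hex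
  refine hj (h0 j (hW j ⟨x, hx, fun i hi => ?_, hj⟩))
  by_contra h
  exact hmin i h hi

lemma exists_mem_eq_on {W : Submodule K (Fin n → K)} (hW : ∀ j ∈ I, IsLeading W j)
    (t : Fin n → K) : ∃ w ∈ W, ∀ i ∈ I, w i = t i := by
  suffices h : ∀ s : ℕ, ∃ w ∈ W, ∀ i ∈ I, (i : ℕ) < s → w i = t i by
    obtain ⟨w, hw, h⟩ := h n
    exact ⟨w, hw, fun i hi => h i hi i.2⟩
  intro s
  induction s with
  | zero => exact ⟨0, W.zero_mem, fun i _ h => absurd h (Nat.not_lt_zero _)⟩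
  | succ s ih =>
    obtain ⟨w, hw, h⟩ := ih
    by_cases hs : ∃ j ∈ I, (j : ℕ) = s
    · obtain ⟨j, hjI, rfl⟩ := hs
      obtain ⟨v, hv, hlt, hne⟩ := hW j hjI
      refine ⟨w + ((t j - w j) / v j) • v, W.add_mem hw (W.smul_mem _ hv), fun i hi his => ?_⟩
      rcases (Nat.lt_succ_iff.1 his).lt_or_eq with hij | hij
      · simp [hlt i hij, h i hi hij]
      · obtain rfl := Fin.ext hij
        simp [hne]
    · refine ⟨w, hw, fun i hi his => h i hi ?_⟩
      have : (i : ℕ) ≠ s := fun e => hs ⟨i, hi, e⟩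
      omega

/-- Restriction to the pivot coordinates is bijective. -/
lemma finrank_eq_card {W : Submodule K (Fin n → K)} (hW : ∀ j, IsLeading W j ↔ j ∈ I) :
    Module.finrank K W = I.card := by
  let ρ : W →ₗ[K] (I → K) := LinearMap.pi fun i => (LinearMap.proj i.1).comp W.subtype
  have hρ : Function.Bijective ρ := by
    constructor
    · rw [← LinearMap.ker_eq_bot, LinearMap.ker_eq_bot']
      intro u hu
      exact Subtype.ext (eq_zero_of_forall_isLeading I (fun j => (hW j).1) u.2
        fun i hi => congrFun hu ⟨i, hi⟩)
    · intro t
      obtain ⟨w, hw, h⟩ := exists_mem_eq_on I (fun j => (hW j).2)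
        (fun i => if hi : i ∈ I then t ⟨i, hi⟩ else 0)
      refine ⟨⟨w, hw⟩, funext fun i => ?_⟩
      have := h i i.2
      simpa [ρ] using this
  rw [(LinearEquiv.ofBijective ρ hρ).finrank_eq]
  simp

/-- The positions of the free entries of an echelon matrix with pivot columns `I`. -/
def freeEntries : Finset (Fin n × Fin n) :=
  Finset.univ.filter fun p => p.1 ∈ I ∧ p.2 ∉ I ∧ p.1 < p.2

/-- Extend by zero a choice of free entries. -/
def extendEntries (c : freeEntries I → K) (i j : Fin n) : K :=
  if h : (i, j) ∈ freeEntries I then c ⟨(i, j), h⟩ else 0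

/-- The subspace whose reduced echelon basis has free entries `c`. -/
def echelonSpace (c : freeEntries I → K) : Submodule K (Fin n → K) where
  carrier := {x | ∀ j ∉ I, x j = ∑ i, extendEntries I c i j * x i}
  add_mem' := fun {x y} hx hy j hj => by
    simp [hx j hj, hy j hj, mul_add, Finset.sum_add_distrib]
  zero_mem' := fun j _ => by simp
  smul_mem' := fun r x hx j hj => by
    simp only [Pi.smul_apply, smul_eq_mul]
    rw [hx j hj, Finset.mul_sum]
    exact Finset.sum_congr rfl fun i _ => by ring

lemma mem_echelonSpace {c : freeEntries I → K} {x : Fin n → K} :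
    x ∈ echelonSpace I c ↔ ∀ j ∉ I, x j = ∑ i, extendEntries I c i j * x i := Iff.rfl

lemma extendEntries_of_notMem {c : freeEntries I → K} {i j : Fin n}
    (h : ¬ (i ∈ I ∧ j ∉ I ∧ i < j)) : extendEntries I c i j = 0 :=
  dif_neg (by simpa [freeEntries] using h)

/-- The row with pivot `i` of the reduced echelon matrix with free entries `c`. -/
def echelonRow (c : freeEntries I → K) (i j : Fin n) : K :=
  if j = i then 1 else extendEntries I c i j

lemma echelonRow_mem (c : freeEntries I → K) {i : Fin n} (hi : i ∈ I) :
    echelonRow I c i ∈ echelonSpace I c := by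
  rw [mem_echelonSpace]
  intro j hj
  rw [Finset.sum_eq_single i]
  · have : j ≠ i := fun h => hj (h ▸ hi)
    simp [echelonRow, this]
  · intro l _ hl
    by_cases hlI : l ∈ I
    · rw [echelonRow, if_neg hl, extendEntries_of_notMem I (fun h => h.2.1 hlI), mul_zero]
    · rw [extendEntries_of_notMem I (fun h => hlI h.1), zero_mul]
  · simp

lemma isLeading_echelonSpace (c : freeEntries I → K) (j : Fin n) :
    IsLeading (echelonSpace I c) j ↔ j ∈ I := by
  constructor
  · rintro ⟨x, hx, hlt, hne⟩
    by_contra hj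
    refine hne ?_
    rw [hx j hj]
    refine Finset.sum_eq_zero fun i _ => ?_
    by_cases hij : i < j
    · rw [hlt i hij, mul_zero]
    · rw [extendEntries_of_notMem I (fun h => hij h.2.2), zero_mul]
  · intro hj
    refine ⟨echelonRow I c j, echelonRow_mem I c hj, fun i hi => ?_, by simp [echelonRow]⟩
    rw [echelonRow, if_neg hi.ne, extendEntries_of_notMem I (fun h => lt_asymm h.2.2 hi)]

lemma echelonSpace_injective :
    Function.Injective (echelonSpace I : (freeEntries I → K) → Submodule K (Fin n → K)) := by
  intro c d h
  funext ⟨⟨i, j⟩, hij⟩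
  have hij' : i ∈ I ∧ j ∉ I ∧ i < j := by simpa [freeEntries] using hij
  obtain ⟨hi, hj, hlt⟩ := hij'
  have hmem := echelonRow_mem I c hi
  have heq := sub_eq_zero.1 (eq_zero_of_forall_isLeading I
    (fun j => (isLeading_echelonSpace I d j).1)
    (Submodule.sub_mem _ (h ▸ hmem) (echelonRow_mem I d hi)) fun l hl => by
      by_cases hli : l = i
      · simp [echelonRow, hli]
      · simp [echelonRow, hli, extendEntries_of_notMem I (fun h => h.2.1 hl)])
  have := congrFun heq j
  simpa [echelonRow, hlt.ne', extendEntries, hij] using this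

lemma exists_echelonSpace_eq {W : Submodule K (Fin n → K)} (hW : ∀ j, IsLeading W j ↔ j ∈ I) :
    ∃ c, echelonSpace I c = W := by
  have huniq : ∀ {x y}, x ∈ W → y ∈ W → (∀ i ∈ I, x i = y i) → x = y := fun hx hy h =>
    sub_eq_zero.1 (eq_zero_of_forall_isLeading I (fun j => (hW j).1) (W.sub_mem hx hy)
      fun i hi => sub_eq_zero.2 (h i hi))
  choose b hbW hb using fun i : Fin n =>
    exists_mem_eq_on I (fun j => (hW j).2) (Pi.single i (1 : K))
  have hblt : ∀ i ∈ I, ∀ j, j < i → b i j = 0 := by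
    intro i hi j
    induction j using WellFoundedLT.induction with
    | _ j ih =>
      intro hji
      by_contra hne
      have hj : j ∈ I := (hW j).1 ⟨b i, hbW i, fun l hl => ih l hl (hl.trans hji), hne⟩
      exact hne (by rw [hb i j hj, Pi.single_eq_of_ne hji.ne])
  let c : freeEntries I → K := fun p => b p.1.1 p.1.2
  have hext : ∀ i ∈ I, ∀ j ∉ I, extendEntries I c i j = b i j := by
    intro i hi j hj
    unfold extendEntries
    split_ifs with h
    · rfl
    · have hij : ¬ i < j := fun hij => h (by simp [freeEntries, hi, hj, hij])
      have hne : j ≠ i := fun e => hj (e ▸ hi)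
      exact (hblt i hi j (lt_of_le_of_ne (not_lt.1 hij) hne)).symm
  have hcomb : ∀ x : Fin n → K, ∑ i ∈ I, x i • b i ∈ W := fun x =>
    W.sum_mem fun i _ => W.smul_mem _ (hbW i)
  have hcombI : ∀ x : Fin n → K, ∀ l ∈ I, (∑ i ∈ I, x i • b i) l = x l := by
    intro x l hl
    rw [Finset.sum_apply, Finset.sum_eq_single_of_mem l hl]
    · simp [hb l l hl]
    · intro i _ hil
      simp [hb i l hl, Pi.single_eq_of_ne hil.symm]
  have hsum : ∀ x : Fin n → K, ∀ j ∉ I,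
      ∑ i, extendEntries I c i j * x i = (∑ i ∈ I, x i • b i) j := by
    intro x j hj
    rw [Finset.sum_apply, ← Finset.sum_subset (Finset.subset_univ I)]
    · exact Finset.sum_congr rfl fun i hi => by simp [hext i hi j hj, mul_comm]
    · intro i _ hi
      rw [extendEntries_of_notMem I (fun h => hi h.1), zero_mul]
  refine ⟨c, le_antisymm (fun x hx => ?_) fun x hx => ?_⟩
  · have : x = ∑ i ∈ I, x i • b i := by
      funext j
      by_cases hj : j ∈ I
      · rw [hcombI x j hj]
      · rw [← hsum x j hj, ← hx j hj]
    rw [this]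
    exact hcomb x
  · intro j hj
    rw [hsum x j hj]
    exact congrFun (huniq hx (hcomb x) fun i hi => (hcombI x i hi).symm) j

lemma natCard_isLeading_iff_mem [Fintype K] :
    Nat.card {W : Submodule K (Fin n → K) // ∀ j, IsLeading W j ↔ j ∈ I} =
      Fintype.card K ^ (freeEntries I).card := by
  rw [← Nat.card_congr (Equiv.ofBijective
    (fun c : freeEntries I → K => (⟨echelonSpace I c, isLeading_echelonSpace I c⟩ :
      {W : Submodule K (Fin n → K) // ∀ j, IsLeading W j ↔ j ∈ I}))
    ⟨fun c d h => echelonSpace_injective I (congrArg Subtype.val h), fun W => by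
      obtain ⟨c, hc⟩ := exists_echelonSpace_eq I W.2
      exact ⟨c, Subtype.ext hc⟩⟩)]
  simp

end Echelon

section ContinuedFraction

/-- One letter of the transfer recursion for the rank generating function of a fence poset. -/
def fenceStep {R : Type*} [CommSemiring R] (q : R) (b : Bool) (s : R × R) : R × R :=
  if b then (s.1 + q * s.2, q * s.2) else (s.1, s.1 + q * s.2)

/-- Rank generating functions of a fence word, read from the right. -/
def fenceGF {R : Type*} [CommSemiring R] (q : R) (w : List Bool) : R × R :=
  w.foldr (fenceStep q) (1, 1)

lemma fenceGF_map {R S : Type*} [CommSemiring R] [CommSemiring S] (f : R →+* S) (q : R)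
    (w : List Bool) :
    fenceGF (f q) w = (f (fenceGF q w).1, f (fenceGF q w).2) := by
  induction w with
  | nil => simp [fenceGF]
  | cons b w ih =>
    change fenceStep (f q) b (fenceGF (f q) w) =
      (f (fenceStep q b (fenceGF q w)).1, f (fenceStep q b (fenceGF q w)).2)
    rw [ih]
    cases b <;> simp [fenceStep]

section

variable {R : Type*} [CommSemiring R] (q : R)

lemma fenceGF_replicate_false (a : ℕ) (w : List Bool) :
    fenceGF q (List.replicate a false ++ w) =
      ((fenceGF q w).1,
        (∑ i ∈ Finset.range a, q ^ i) * (fenceGF q w).1 + q ^ a * (fenceGF q w).2) := by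
  induction a with
  | zero => simp
  | succ a ih =>
    change fenceStep q false (fenceGF q (List.replicate a false ++ w)) = _
    rw [ih, Finset.sum_range_succ']
    simp only [fenceStep, pow_succ, ← Finset.sum_mul]
    ext
    · simp
    · simp; ring

lemma fenceGF_replicate_true (b : ℕ) (w : List Bool) :
    fenceGF q (List.replicate b true ++ w) =
      ((fenceGF q w).1 + q * (∑ i ∈ Finset.range b, q ^ i) * (fenceGF q w).2,
        q ^ b * (fenceGF q w).2) := by
  induction b with
  | zero => simp
  | succ b ih =>
    change fenceStep q true (fenceGF q (List.replicate b true ++ w)) = _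
    rw [ih, Finset.sum_range_succ]
    simp only [fenceStep, pow_succ]
    ext
    · simp; ring
    · simp; ring

end

/-- The word of the snake graph of `a`, preceded by one additional horizontal step. -/
def extendedWord : List ℕ → List Bool
  | [] => []
  | [_] => []
  | [a, b] => List.replicate a false ++ List.replicate (b - 1) true
  | a :: b :: l => List.replicate a false ++ (List.replicate b true ++ extendedWord l)

lemma extendedWord_cons_cons (a b : ℕ) {l : List ℕ} (hl : l ≠ []) :
    extendedWord (a :: b :: l) =
      List.replicate a false ++ (List.replicate b true ++ extendedWord l) := by
  cases l with
  | nil => exact absurd rfl hl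
  | cons c l => rfl

lemma even_list_induction {P : List ℕ → Prop} (base : ∀ a b, P [a, b])
    (step : ∀ a b l, l ≠ [] → P l → P (a :: b :: l)) :
    ∀ (m : ℕ) (a : List ℕ), 0 < m → a.length = 2 * m → P a := by
  intro m
  induction m with
  | zero => intro a h; omega
  | succ m ih =>
    intro a _ hlen
    match a, hlen with
    | [a, b], _ => exact base a b
    | a :: b :: c :: l, hlen =>
      simp only [List.length_cons] at hlen
      exact step a b _ (by simp) (ih (c :: l) (by omega) (by simp; omega))

section

variable {R : Type*} [CommSemiring R] (q : R)

lemma fenceGF_extendedWord_pair (a : ℕ) {b : ℕ} (hb : 1 ≤ b) :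
    fenceGF q (extendedWord [a, b]) =
      (∑ i ∈ Finset.range b, q ^ i,
        (∑ i ∈ Finset.range a, q ^ i) * (∑ i ∈ Finset.range b, q ^ i) + q ^ (a + b - 1)) := by
  obtain ⟨b, rfl⟩ := Nat.exists_eq_add_of_le' hb
  have h := fenceGF_replicate_true q b []
  rw [List.append_nil] at h
  rw [extendedWord, Nat.add_sub_cancel, fenceGF_replicate_false, h]
  have hs : 1 + q * ∑ i ∈ Finset.range b, q ^ i = ∑ i ∈ Finset.range (b + 1), q ^ i := by
    rw [Finset.sum_range_succ', Finset.mul_sum, add_comm]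
    simp only [pow_succ', pow_zero]
  simp only [fenceGF, List.foldr_nil, mul_one, hs, ← add_assoc, Nat.add_sub_cancel, pow_add]

lemma fenceGF_extendedWord_cons_cons (a b : ℕ) {l : List ℕ} (hl : l ≠ []) :
    fenceGF q (extendedWord (a :: b :: l)) =
      ((fenceGF q (extendedWord l)).1 +
          q * (∑ i ∈ Finset.range b, q ^ i) * (fenceGF q (extendedWord l)).2,
        (∑ i ∈ Finset.range a, q ^ i) * ((fenceGF q (extendedWord l)).1 +
          q * (∑ i ∈ Finset.range b, q ^ i) * (fenceGF q (extendedWord l)).2) +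
          q ^ (a + b) * (fenceGF q (extendedWord l)).2) := by
  rw [extendedWord_cons_cons a b hl, fenceGF_replicate_false, fenceGF_replicate_true, pow_add]
  simp only [mul_assoc]

end

open Polynomial

lemma geom_X_monic {a : ℕ} (ha : 1 ≤ a) : (∑ i ∈ Finset.range a, (X : ℚ[X]) ^ i).Monic :=
  monic_geom_sum_X (by omega)

lemma geom_X_natDegree {a : ℕ} (ha : 1 ≤ a) :
    (∑ i ∈ Finset.range a, (X : ℚ[X]) ^ i).natDegree = a - 1 := by
  have h := congrArg natDegree (geom_sum_mul (X : ℚ[X]) a)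
  have h1 : (X - 1 : ℚ[X]).Monic := by simpa using monic_X_sub_C (1 : ℚ)
  have h2 : (X - 1 : ℚ[X]).natDegree = 1 := by simpa using natDegree_X_sub_C (1 : ℚ)
  have h3 : (X ^ a - 1 : ℚ[X]).natDegree = a := by
    simpa using natDegree_X_pow_sub_C (n := a) (r := (1 : ℚ))
  rw [(geom_X_monic ha).natDegree_mul h1, h2, h3] at h
  omega

lemma geom_X_eval_zero {a : ℕ} (ha : 1 ≤ a) :
    (∑ i ∈ Finset.range a, (X : ℚ[X]) ^ i).eval 0 = 1 := by
  obtain ⟨a, rfl⟩ := Nat.exists_eq_add_of_le' ha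
  simp [eval_finsetSum, Finset.sum_range_succ']

/-- The properties making `R / S` a normalized reduced fraction. -/
structure IsNormalizedPair (S R : ℚ[X]) : Prop where
  monic_den : S.Monic
  monic_num : R.Monic
  natDegree_lt : S.natDegree < R.natDegree
  isCoprime : IsCoprime R S
  eval_zero : S.eval 0 = 1

lemma isCoprime_X_pow {S : ℚ[X]} (hS : S.eval 0 = 1) (k : ℕ) : IsCoprime (X ^ k) S := by
  refine IsCoprime.pow_left ?_
  refine (irreducible_X.coprime_iff_not_dvd).2 fun h => ?_
  rw [X_dvd_iff, coeff_zero_eq_eval_zero, hS] at h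
  exact one_ne_zero h

lemma monic_add_of_natDegree_lt {p r : ℚ[X]} (hr : r.Monic) (h : p.natDegree < r.natDegree) :
    (p + r).Monic ∧ (p + r).natDegree = r.natDegree :=
  ⟨hr.add_of_right (degree_lt_degree h), natDegree_add_eq_right_of_natDegree_lt h⟩

lemma isNormalizedPair_of_den {S R : ℚ[X]} {a k : ℕ} (ha : 1 ≤ a) (hS : S.Monic) (hR : R.Monic)
    (hdeg : S.natDegree + a ≤ k + R.natDegree) (hcop : IsCoprime R S) (h0 : S.eval 0 = 1) :
    IsNormalizedPair S ((∑ i ∈ Finset.range a, (X : ℚ[X]) ^ i) * S + X ^ k * R) := by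
  have hd1 : ((∑ i ∈ Finset.range a, (X : ℚ[X]) ^ i) * S).natDegree = a - 1 + S.natDegree := by
    rw [(geom_X_monic ha).natDegree_mul hS, geom_X_natDegree ha]
  have hd2 : (X ^ k * R).natDegree = k + R.natDegree := by
    rw [(monic_X_pow k).natDegree_mul hR, natDegree_X_pow]
  obtain ⟨hm, hd⟩ := monic_add_of_natDegree_lt ((monic_X_pow k).mul hR)
    (p := (∑ i ∈ Finset.range a, (X : ℚ[X]) ^ i) * S) (by omega)
  exact ⟨hS, hm, by omega,
    (IsCoprime.mul_left (isCoprime_X_pow h0 k) hcop).mul_add_right_left _, h0⟩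

lemma isNormalizedPair_fenceGF (m : ℕ) (a : List ℕ) (hm : 0 < m) (hlen : a.length = 2 * m) :
    (∀ x ∈ a, 1 ≤ x) →
      IsNormalizedPair (fenceGF (X : ℚ[X]) (extendedWord a)).1
        (fenceGF (X : ℚ[X]) (extendedWord a)).2 := by
  refine even_list_induction (P := fun a => (∀ x ∈ a, 1 ≤ x) →
    IsNormalizedPair (fenceGF (X : ℚ[X]) (extendedWord a)).1
      (fenceGF (X : ℚ[X]) (extendedWord a)).2) ?_ ?_ m a hm hlen
  · intro a b hpos
    simp only [List.mem_cons, List.not_mem_nil, or_false, forall_eq_or_imp, forall_eq] at hpos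
    obtain ⟨ha, hb⟩ := hpos
    rw [fenceGF_extendedWord_pair _ _ hb, ← mul_one (X ^ (a + b - 1) : ℚ[X])]
    refine isNormalizedPair_of_den ha (geom_X_monic hb) monic_one ?_ isCoprime_one_left
      (geom_X_eval_zero hb)
    rw [geom_X_natDegree hb]
    omega
  · intro a b l hl ih hpos
    simp only [List.mem_cons, forall_eq_or_imp] at hpos
    obtain ⟨ha, hb, hpos⟩ := hpos
    obtain ⟨hS, hR, hlt, hcop, h0⟩ := ih hpos
    rw [fenceGF_extendedWord_cons_cons _ _ _ hl]
    set S := (fenceGF (X : ℚ[X]) (extendedWord l)).1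
    set R := (fenceGF (X : ℚ[X]) (extendedWord l)).2
    have hXg := monic_X.mul (geom_X_monic hb)
    have hd : (X * (∑ i ∈ Finset.range b, (X : ℚ[X]) ^ i) * R).natDegree = b + R.natDegree := by
      rw [hXg.natDegree_mul hR, monic_X.natDegree_mul (geom_X_monic hb), geom_X_natDegree hb,
        natDegree_X]
      omega
    obtain ⟨hm, hd'⟩ := monic_add_of_natDegree_lt (hXg.mul hR) (p := S) (by omega)
    refine isNormalizedPair_of_den ha hm hR (by simp only; omega) ?_ (by simp [h0])
    exact hcop.add_mul_right_right _

lemma geom_inv_mul_pow {F : Type*} [Field F] {v : F} (hv : v ≠ 0) (b : ℕ) :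
    (∑ i ∈ Finset.range b, v⁻¹ ^ i) * v ^ b = v * ∑ i ∈ Finset.range b, v ^ i := by
  induction b with
  | zero => simp
  | succ b ih =>
    rw [Finset.sum_range_succ, Finset.sum_range_succ', add_mul, pow_succ v b, ← mul_assoc, ih,
      ← mul_assoc, ← mul_pow, inv_mul_cancel₀ hv]
    simp only [pow_succ, ← Finset.sum_mul]
    ring

lemma geom_inv {F : Type*} [Field F] {v : F} (hv : v ≠ 0) (b : ℕ) :
    ∑ i ∈ Finset.range b, v⁻¹ ^ i = (v * ∑ i ∈ Finset.range b, v ^ i) / v ^ b := by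
  rw [eq_div_iff (pow_ne_zero b hv), geom_inv_mul_pow hv]

lemma algebraMap_fenceGF (w : List Bool) :
    fenceGF (RatFunc.X : RatFunc ℚ) w =
      (algebraMap ℚ[X] (RatFunc ℚ) (fenceGF X w).1, algebraMap ℚ[X] (RatFunc ℚ) (fenceGF X w).2) := by
  rw [← fenceGF_map, RatFunc.algebraMap_X]

lemma qCF_eq_fenceGF_div (m : ℕ) (a : List ℕ) (hm : 0 < m) (hlen : a.length = 2 * m) :
    (∀ x ∈ a, 1 ≤ x) →
      qCF RatFunc.X a = (fenceGF (RatFunc.X : RatFunc ℚ) (extendedWord a)).2 /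
        (fenceGF (RatFunc.X : RatFunc ℚ) (extendedWord a)).1 := by
  have hX : (RatFunc.X : RatFunc ℚ) ≠ 0 := RatFunc.X_ne_zero
  have hne : ∀ {p : ℚ[X]}, p.Monic → algebraMap ℚ[X] (RatFunc ℚ) p ≠ 0 :=
    fun hp => RatFunc.algebraMap_ne_zero hp.ne_zero
  have key : ∀ (m : ℕ) (a : List ℕ), 0 < m → a.length = 2 * m → (∀ x ∈ a, 1 ≤ x) →
      (fenceGF (RatFunc.X : RatFunc ℚ) (extendedWord a)).1 ≠ 0 ∧
        (fenceGF (RatFunc.X : RatFunc ℚ) (extendedWord a)).2 ≠ 0 := by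
    intro m a hm hlen hpos
    have h := isNormalizedPair_fenceGF m a hm hlen hpos
    rw [algebraMap_fenceGF]
    exact ⟨hne h.monic_den, hne h.monic_num⟩
  induction m generalizing a with
  | zero => omega
  | succ m ih =>
    intro hpos
    have hk := key _ a hm hlen hpos
    match a, hlen with
    | [a, b], _ =>
      simp only [List.mem_cons, List.not_mem_nil, or_false, forall_eq_or_imp, forall_eq] at hpos
      rw [fenceGF_extendedWord_pair _ _ hpos.2] at hk ⊢
      simp only [qCF]
      rw [geom_inv hX]
      obtain ⟨b, rfl⟩ := Nat.exists_eq_add_of_le' hpos.2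
      simp only [Nat.add_sub_cancel, ← add_assoc] at hk ⊢
      have hk1 := hk.1
      field_simp
      ring
    | a :: b :: c :: l, hlen =>
      simp only [List.length_cons] at hlen
      simp only [List.mem_cons, forall_eq_or_imp] at hpos
      have hlen' : (c :: l).length = 2 * m := by simp; omega
      have hpos' : ∀ x ∈ c :: l, 1 ≤ x := by simpa using hpos.2.2
      have hk' := key m (c :: l) (by omega) hlen' hpos'
      rw [fenceGF_extendedWord_cons_cons _ _ _ (List.cons_ne_nil c l)] at hk ⊢
      rw [qCF, qCF, inv_inv, ih (c :: l) (by omega) hlen' hpos', geom_inv hX]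
      generalize (fenceGF (RatFunc.X : RatFunc ℚ) (extendedWord (c :: l))).1 = S at *
      generalize (fenceGF (RatFunc.X : RatFunc ℚ) (extendedWord (c :: l))).2 = R at *
      generalize (∑ i ∈ Finset.range b, (RatFunc.X : RatFunc ℚ) ^ i) = B at *
      generalize (∑ i ∈ Finset.range a, (RatFunc.X : RatFunc ℚ) ^ i) = A at *
      generalize (RatFunc.X : RatFunc ℚ) = v at *
      obtain ⟨hk1, hk2⟩ := hk'
      have hk3 := hk.1
      simp only at hk3
      have h1 : v * B / v ^ b + v⁻¹ ^ b / (R / S) = (S + v * B * R) / (v ^ b * R) := by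
        rw [inv_pow]
        field_simp
        ring
      rw [h1, div_div_eq_mul_div, pow_add]
      generalize S + v * B * R = T at *
      field_simp

lemma num_div_of_isCoprime {F : Type*} [Field F] {R S : F[X]} (h : IsCoprime R S)
    (hS : S.Monic) :
    (algebraMap F[X] (RatFunc F) R / algebraMap F[X] (RatFunc F) S).num = R := by
  classical
  have hg : gcd R S = 1 := by
    rw [← normalize_gcd, normalize_eq_one]
    exact (gcd_isUnit_iff R S).2 h
  rw [RatFunc.num_div, hg, EuclideanDomain.div_one, EuclideanDomain.div_one, hS.leadingCoeff]
  simp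

lemma num_qCF_s17 (m : ℕ) (a : List ℕ) (hm : 0 < m) (hlen : a.length = 2 * m)
    (hpos : ∀ x ∈ a, 1 ≤ x) :
    (qCF RatFunc.X a).num = (fenceGF (X : ℚ[X]) (extendedWord a)).2 := by
  obtain ⟨hS, hR, -, hcop, -⟩ := isNormalizedPair_fenceGF m a hm hlen hpos
  rw [qCF_eq_fenceGF_div m a hm hlen hpos, algebraMap_fenceGF]
  simp only
  exact num_div_of_isCoprime hcop hS

lemma eval_num_qCF (m : ℕ) (a : List ℕ) (hm : 0 < m) (hlen : a.length = 2 * m)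
    (hpos : ∀ x ∈ a, 1 ≤ x) (q : ℚ) :
    (qCF RatFunc.X a).num.eval q = (fenceGF q (extendedWord a)).2 := by
  have h := fenceGF_map (evalRingHom q) X (extendedWord a)
  rw [coe_evalRingHom, eval_X] at h
  rw [num_qCF_s17 m a hm hlen hpos, h]

end ContinuedFraction

section SkewShape

lemma tilePos_append_of_le (w : List Bool) (b : Bool) {j : ℕ} (hj : j ≤ w.length) :
    tilePos (w ++ [b]) j = tilePos w j := by
  rw [tilePos, tilePos, List.take_append_of_le_length hj]

lemma tilePos_length (w : List Bool) : tilePos w w.length = (w.count false, w.count true) := by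
  rw [tilePos, List.take_length]

lemma tilePos_fst_le (w : List Bool) (j : ℕ) : (tilePos w j).1 ≤ w.count false :=
  (List.take_sublist j w).count_le false

lemma tilePos_snd_le (w : List Bool) (j : ℕ) : (tilePos w j).2 ≤ w.count true :=
  (List.take_sublist j w).count_le true

lemma filter_tiles_append (w : List Bool) (b : Bool) (P : ℕ × ℕ → Prop) [DecidablePred P] :
    (Finset.range ((w ++ [b]).length + 1)).filter (fun j => P (tilePos (w ++ [b]) j)) =
      if P ((w ++ [b]).count false, (w ++ [b]).count true) then
        insert (w.length + 1) ((Finset.range (w.length + 1)).filter fun j => P (tilePos w j))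
      else (Finset.range (w.length + 1)).filter fun j => P (tilePos w j) := by
  have hlen : (w ++ [b]).length = w.length + 1 := by simp
  have hlast : tilePos (w ++ [b]) (w.length + 1) =
      ((w ++ [b]).count false, (w ++ [b]).count true) := by
    rw [← hlen, tilePos_length]
  have hold : (Finset.range (w.length + 1)).filter (fun j => P (tilePos (w ++ [b]) j)) =
      (Finset.range (w.length + 1)).filter fun j => P (tilePos w j) :=
    Finset.filter_congr fun j hj => by
      rw [tilePos_append_of_le w b (Nat.lt_succ_iff.1 (Finset.mem_range.1 hj))]
  rw [hlen, Finset.range_add_one, Finset.filter_insert, hlast, hold]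

lemma rowLen_le (w : List Bool) (y : ℕ) : rowLen w y ≤ w.count false + 1 :=
  Nat.succ_le_succ (Finset.sup_le fun j _ => tilePos_fst_le w j)

lemma rowLen_of_count_le {w : List Bool} {y : ℕ} (hy : w.count true ≤ y) :
    rowLen w y = w.count false + 1 := by
  refine le_antisymm (rowLen_le w y) (Nat.succ_le_succ ?_)
  have h := Finset.le_sup (f := fun j => (tilePos w j).1)
    (s := (Finset.range (w.length + 1)).filter fun j => (tilePos w j).2 ≤ y) (b := w.length)
    (by simp [tilePos_length, hy])
  simpa [tilePos_length] using h

lemma rowLen_append_of_lt {w : List Bool} {b : Bool} {y : ℕ} (hy : y < (w ++ [b]).count true) :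
    rowLen (w ++ [b]) y = rowLen w y := by
  rw [rowLen, filter_tiles_append w b (fun p => p.2 ≤ y), if_neg (not_le.2 hy), rowLen]
  congr 1
  refine Finset.sup_congr rfl fun j hj => ?_
  rw [tilePos_append_of_le]
  have := Finset.mem_range.1 (Finset.mem_filter.1 hj).1
  omega

/-- The number of tiles in row `y`. -/
def rowCard (w : List Bool) (y : ℕ) : ℕ :=
  ((Finset.range (w.length + 1)).filter fun j => (tilePos w j).2 = y).card

lemma rowMin_eq (w : List Bool) (y : ℕ) : rowMin w y = rowLen w y - rowCard w y := rfl

lemma rowCard_append (w : List Bool) (b : Bool) (y : ℕ) :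
    rowCard (w ++ [b]) y = rowCard w y + if (w ++ [b]).count true = y then 1 else 0 := by
  rw [rowCard, filter_tiles_append w b (fun p => p.2 = y), rowCard]
  split_ifs
  · rw [Finset.card_insert_of_notMem (by simp)]
  · rfl

lemma rowCard_of_lt {w : List Bool} {y : ℕ} (hy : w.count true < y) : rowCard w y = 0 := by
  rw [rowCard, Finset.card_eq_zero, Finset.filter_eq_empty_iff]
  intro j _
  have := tilePos_snd_le w j
  omega

lemma count_append_true (w : List Bool) :
    (w ++ [true]).count false = w.count false ∧ (w ++ [true]).count true = w.count true + 1 := by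
  simp

lemma count_append_false (w : List Bool) :
    (w ++ [false]).count false = w.count false + 1 ∧ (w ++ [false]).count true = w.count true := by
  simp

lemma lamPart_of_lt {w : List Bool} {y : ℕ} (h : y < w.count true + 1) :
    lamPart w y = rowLen w (w.count true - y) := by
  rw [lamPart, snakeHeight, if_pos h, Nat.add_sub_cancel]

lemma lamPart_of_le {w : List Bool} {y : ℕ} (h : w.count true + 1 ≤ y) : lamPart w y = 0 :=
  if_neg (not_lt.2 h)

lemma muPart_of_lt {w : List Bool} {y : ℕ} (h : y < w.count true + 1) :
    muPart w y = rowLen w (w.count true - y) - rowCard w (w.count true - y) := by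
  rw [muPart, snakeHeight, if_pos h, Nat.add_sub_cancel, rowMin_eq]

lemma muPart_of_le {w : List Bool} {y : ℕ} (h : w.count true + 1 ≤ y) : muPart w y = 0 :=
  if_neg (not_lt.2 h)

lemma lamPart_zero (w : List Bool) : lamPart w 0 = w.count false + 1 := by
  rw [lamPart_of_lt (Nat.succ_pos _), rowLen_of_count_le (Nat.sub_zero _).ge]

lemma lamPart_le (w : List Bool) (y : ℕ) : lamPart w y ≤ w.count false + 1 := by
  unfold lamPart
  split_ifs
  · exact rowLen_le w _
  · omega

lemma lamPart_append_true_succ (w : List Bool) (y : ℕ) :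
    lamPart (w ++ [true]) (y + 1) = lamPart w y := by
  have hc := (count_append_true w).2
  rcases Nat.lt_or_ge y (w.count true + 1) with h | h
  · rw [lamPart_of_lt h, lamPart_of_lt (by omega), rowLen_append_of_lt (by omega), hc,
      Nat.add_sub_add_right]
  · rw [lamPart_of_le h, lamPart_of_le (by omega)]

lemma lamPart_append_false_succ (w : List Bool) (y : ℕ) :
    lamPart (w ++ [false]) (y + 1) = lamPart w (y + 1) := by
  have hc := (count_append_false w).2
  rcases Nat.lt_or_ge (y + 1) (w.count true + 1) with h | h
  · rw [lamPart_of_lt h, lamPart_of_lt (by omega), rowLen_append_of_lt (by omega), hc]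
  · rw [lamPart_of_le h, lamPart_of_le (by omega)]

lemma muPart_append_true_zero (w : List Bool) : muPart (w ++ [true]) 0 = w.count false := by
  have hc := (count_append_true w).2
  rw [muPart_of_lt (Nat.succ_pos _), rowLen_of_count_le (Nat.sub_zero _).ge, rowCard_append,
    rowCard_of_lt (by omega), if_pos (Nat.sub_zero _).symm, (count_append_true w).1]
  omega

lemma muPart_append_true_succ (w : List Bool) (y : ℕ) :
    muPart (w ++ [true]) (y + 1) = muPart w y := by
  have hc := (count_append_true w).2
  rcases Nat.lt_or_ge y (w.count true + 1) with h | h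
  · rw [muPart_of_lt h, muPart_of_lt (by omega), rowLen_append_of_lt (by omega), rowCard_append,
      if_neg (by omega), add_zero, hc, Nat.add_sub_add_right]
  · rw [muPart_of_le h, muPart_of_le (by omega)]

lemma muPart_append_false (w : List Bool) (y : ℕ) : muPart (w ++ [false]) y = muPart w y := by
  obtain ⟨hc', hc⟩ := count_append_false w
  rcases Nat.lt_or_ge y (w.count true + 1) with h | h
  · rw [muPart_of_lt h, muPart_of_lt (by omega), rowCard_append, hc]
    rcases y with _ | y
    · rw [rowLen_of_count_le (by omega), rowLen_of_count_le (by omega), if_pos (Nat.sub_zero _).symm,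
        hc']
      omega
    · rw [rowLen_append_of_lt (by omega), if_neg (by omega), add_zero]
  · rw [muPart_of_le h, muPart_of_le (by omega)]

/-- The partition `ν` lies between `μ` and `λ`. -/
def IsBetween (w : List Bool) (ν : ℕ → ℕ) : Prop :=
  Antitone ν ∧ ∀ y, muPart w y ≤ ν y ∧ ν y ≤ lamPart w y

lemma IsBetween.le {w : List Bool} {ν : ℕ → ℕ} (h : IsBetween w ν) (y : ℕ) :
    ν y ≤ w.count false + 1 :=
  (h.2 y).2.trans (lamPart_le w y)

lemma IsBetween.eq_zero {w : List Bool} {ν : ℕ → ℕ} (h : IsBetween w ν) {y : ℕ}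
    (hy : snakeHeight w ≤ y) : ν y = 0 := by
  have := (h.2 y).2
  rw [lamPart, if_neg (by omega)] at this
  omega

lemma antitone_iff_succ {ν : ℕ → ℕ} : Antitone ν ↔ ∀ y, ν (y + 1) ≤ ν y :=
  ⟨fun h y => h (Nat.le_succ y), antitone_nat_of_succ_le⟩

/-- Prepend a part. -/
def consPart (p : ℕ) (ν : ℕ → ℕ) : ℕ → ℕ
  | 0 => p
  | y + 1 => ν y

lemma consPart_head_tail (ν : ℕ → ℕ) : consPart (ν 0) (fun y => ν (y + 1)) = ν := by
  funext y; cases y <;> rfl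

lemma isBetween_append_true_consPart (w : List Bool) (p : ℕ) (ν : ℕ → ℕ) :
    IsBetween (w ++ [true]) (consPart p ν) ↔
      ν 0 ≤ p ∧ w.count false ≤ p ∧ p ≤ w.count false + 1 ∧ IsBetween w ν := by
  simp only [IsBetween, antitone_iff_succ]
  constructor
  · rintro ⟨h1, h2⟩
    have h0 := h2 0
    rw [muPart_append_true_zero, lamPart_zero, (count_append_true w).1] at h0
    refine ⟨h1 0, h0.1, h0.2, fun y => h1 (y + 1), fun y => ?_⟩
    have := h2 (y + 1)
    rwa [muPart_append_true_succ, lamPart_append_true_succ] at this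
  · rintro ⟨h0, h1, h2, h3, h4⟩
    refine ⟨fun y => ?_, fun y => ?_⟩
    · cases y with
      | zero => exact h0
      | succ y => exact h3 y
    · cases y with
      | zero =>
        rw [muPart_append_true_zero, lamPart_zero, (count_append_true w).1]
        exact ⟨h1, h2⟩
      | succ y =>
        rw [muPart_append_true_succ, lamPart_append_true_succ]
        exact h4 y

lemma isBetween_append_false (w : List Bool) (ν : ℕ → ℕ) (h0 : ν 0 ≤ w.count false + 1) :
    IsBetween (w ++ [false]) ν ↔ IsBetween w ν := by
  simp only [IsBetween]
  refine and_congr_right fun _ => forall_congr' fun y => ?_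
  rw [muPart_append_false]
  cases y with
  | zero =>
    rw [lamPart_zero, lamPart_zero, (count_append_false w).1]
    omega
  | succ y => rw [lamPart_append_false_succ]

lemma isBetween_append_false_consPart (w : List Bool) (ν : ℕ → ℕ) :
    IsBetween (w ++ [false]) (consPart (w.count false + 2) ν) ↔
      IsBetween w (consPart (w.count false + 1) ν) := by
  simp only [IsBetween, antitone_iff_succ]
  have hmu : muPart w 0 ≤ w.count false + 1 := by
    rw [muPart, if_pos (by simp [snakeHeight]), rowMin_eq]
    exact (Nat.sub_le _ _).trans (rowLen_le _ _)
  constructor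
  · rintro ⟨h1, h2⟩
    have h3 := h2 1
    rw [lamPart_append_false_succ] at h3
    refine ⟨fun y => ?_, fun y => ?_⟩
    · cases y with
      | zero => exact h3.2.trans (lamPart_le w _)
      | succ y => exact h1 (y + 1)
    · cases y with
      | zero => exact ⟨hmu, (lamPart_zero w).ge⟩
      | succ y =>
        have := h2 (y + 1)
        rwa [muPart_append_false, lamPart_append_false_succ] at this
  · rintro ⟨h1, h2⟩
    refine ⟨fun y => ?_, fun y => ?_⟩
    · cases y with
      | zero => exact (h1 0).trans (Nat.le_succ _)
      | succ y => exact h1 (y + 1)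
    · rw [muPart_append_false]
      cases y with
      | zero =>
        rw [lamPart_zero, (count_append_false w).1]
        exact ⟨hmu.trans (Nat.le_succ _), le_rfl⟩
      | succ y =>
        rw [lamPart_append_false_succ]
        exact h2 (y + 1)

end SkewShape

section GeneratingFunction

variable {R : Type*} [CommSemiring R] (q : R)

/-- One letter of the transfer recursion, read from the left. -/
def fenceStepLeft (s : R × R) (b : Bool) : R × R :=
  if b then (s.1, q * (s.1 + s.2)) else (s.1 + s.2, q * s.2)

lemma foldl_fenceStepLeft (w : List Bool) (s : R × R) :
    (w.foldl (fenceStepLeft q) s).1 + (w.foldl (fenceStepLeft q) s).2 =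
      s.1 * (fenceGF q w).1 + s.2 * (fenceGF q w).2 := by
  induction w generalizing s with
  | nil => simp [fenceGF]
  | cons b w ih =>
    rw [List.foldl_cons, ih]
    change _ = s.1 * (fenceStep q b (fenceGF q w)).1 + s.2 * (fenceStep q b (fenceGF q w)).2
    cases b <;> simp only [fenceStep, fenceStepLeft, if_true, Bool.false_eq_true, if_false] <;> ring

lemma sum_consPart (h p : ℕ) (ν : ℕ → ℕ) :
    ∑ y ∈ Finset.range (h + 1), consPart p ν y = (∑ y ∈ Finset.range h, ν y) + p :=
  Finset.sum_range_succ' _ _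

lemma consPart_injective (p : ℕ) : Function.Injective (consPart p) :=
  fun _ _ h => funext fun y => congrFun h (y + 1)

lemma exists_finset_isBetween_split (w : List Bool) :
    ∃ A B : Finset (ℕ → ℕ),
      (∀ ν, ν ∈ A ↔ IsBetween w ν ∧ ν 0 ≤ w.count false) ∧
      (∀ ν, ν ∈ B ↔ IsBetween w ν ∧ ν 0 = w.count false + 1) ∧
      ∑ ν ∈ A, q ^ (∑ y ∈ Finset.range (w.count true + 1), ν y) =
        q ^ (∑ y ∈ Finset.range (w.count true + 1), muPart w y) *
          (w.foldl (fenceStepLeft q) (1, q)).1 ∧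
      ∑ ν ∈ B, q ^ (∑ y ∈ Finset.range (w.count true + 1), ν y) =
        q ^ (∑ y ∈ Finset.range (w.count true + 1), muPart w y) *
          (w.foldl (fenceStepLeft q) (1, q)).2 := by
  classical
  induction w using List.reverseRecOn with
  | nil =>
    have hlam : ∀ y, lamPart [] (y + 1) = 0 := fun y => lamPart_of_le (by simp)
    have hmu : ∀ y, muPart [] y = 0 := by
      intro y
      rcases y with _ | y
      · rw [muPart_of_lt (by simp), rowLen_of_count_le (by simp)]
        simp [rowCard, tilePos]
      · exact muPart_of_le (by simp)
    have key : ∀ ν, IsBetween [] ν ↔ ν 0 ≤ 1 ∧ ∀ y, ν (y + 1) = 0 := by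
      intro ν
      constructor
      · rintro h
        exact ⟨h.le 0, fun y => Nat.le_zero.1 ((h.2 (y + 1)).2.trans (hlam y).le)⟩
      · rintro ⟨h0, h1⟩
        refine ⟨antitone_iff_succ.2 fun y => by rw [h1]; exact Nat.zero_le _, fun y => ?_⟩
        rw [hmu]
        cases y with
        | zero => exact ⟨Nat.zero_le _, by rw [lamPart_zero]; exact h0⟩
        | succ y => rw [h1]; exact ⟨le_rfl, Nat.zero_le _⟩
    have heq : ∀ p ν, ν = consPart p (fun _ => 0) ↔ ν 0 = p ∧ ∀ y, ν (y + 1) = 0 := by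
      intro p ν
      constructor
      · rintro rfl
        exact ⟨rfl, fun _ => rfl⟩
      · rintro ⟨rfl, h⟩
        funext y
        cases y with
        | zero => rfl
        | succ y => exact h y
    refine ⟨{consPart 0 fun _ => 0}, {consPart 1 fun _ => 0}, fun ν => ?_, fun ν => ?_, ?_, ?_⟩
    · rw [Finset.mem_singleton, heq, key]
      simp only [List.count_nil]
      exact ⟨fun h => ⟨⟨by omega, h.2⟩, by omega⟩, fun h => ⟨by omega, h.1.2⟩⟩
    · rw [Finset.mem_singleton, heq, key]
      simp only [List.count_nil]
      exact ⟨fun h => ⟨⟨by omega, h.2⟩, by omega⟩, fun h => ⟨by omega, h.1.2⟩⟩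
    · simp [consPart, hmu]
    · simp [consPart, hmu]
  | append_singleton w b ih =>
    obtain ⟨A, B, hA, hB, hsA, hsB⟩ := ih
    have hdisj : Disjoint A B := Finset.disjoint_left.2 fun ν h1 h2 => by
      have := ((hA ν).1 h1).2
      have := ((hB ν).1 h2).2
      omega
    have hAB : ∀ ν, ν ∈ A ∪ B ↔ IsBetween w ν := fun ν => by
      rw [Finset.mem_union, hA, hB, ← and_or_left]
      refine and_iff_left_of_imp fun h => ?_
      have := h.le 0
      omega
    rw [List.foldl_append, List.foldl_cons, List.foldl_nil]
    cases b with
    | false =>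
      obtain ⟨hf, ht⟩ := count_append_false w
      simp only [hf, ht, muPart_append_false, fenceStepLeft, Bool.false_eq_true, if_false]
      refine ⟨A ∪ B, B.image fun ν => consPart (w.count false + 2) fun y => ν (y + 1),
        fun ν => ?_, fun ν => ?_, ?_, ?_⟩
      · rw [hAB]
        constructor
        · intro h
          exact ⟨(isBetween_append_false w ν (h.le 0)).2 h, h.le 0⟩
        · rintro ⟨h, h0⟩
          exact (isBetween_append_false w ν h0).1 h
      · rw [Finset.mem_image]
        constructor
        · rintro ⟨ν, hν, rfl⟩
          obtain ⟨h, h0⟩ := (hB ν).1 hν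
          refine ⟨(isBetween_append_false_consPart w _).2 ?_, rfl⟩
          rwa [← h0, consPart_head_tail]
        · rintro ⟨h, h0⟩
          refine ⟨consPart (w.count false + 1) fun y => ν (y + 1), (hB _).2 ⟨?_, rfl⟩, ?_⟩
          · rw [← isBetween_append_false_consPart]
            rwa [← consPart_head_tail ν, h0] at h
          · rw [← consPart_head_tail ν, h0]
            rfl
      · rw [Finset.sum_union hdisj, hsA, hsB, mul_add]
      · rw [Finset.sum_image]
        · rw [mul_left_comm, ← hsB, Finset.mul_sum]
          refine Finset.sum_congr rfl fun ν hν => ?_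
          rw [sum_consPart, Finset.sum_range_succ' ν, ((hB ν).1 hν).2, ← pow_succ']
          rfl
        · intro ν hν ν' hν' h
          have h1 := consPart_injective _ h
          rw [← consPart_head_tail ν, ← consPart_head_tail ν', h1, ((hB ν).1 hν).2,
            ((hB ν').1 hν').2]
    | true =>
      obtain ⟨hf, ht⟩ := count_append_true w
      have hmu : ∑ y ∈ Finset.range (w.count true + 1 + 1), muPart (w ++ [true]) y =
          (∑ y ∈ Finset.range (w.count true + 1), muPart w y) + w.count false := by
        rw [Finset.sum_range_succ', muPart_append_true_zero]
        simp only [muPart_append_true_succ]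
      simp only [hf, ht, hmu, fenceStepLeft, if_true]
      refine ⟨A.image (consPart (w.count false)), (A ∪ B).image (consPart (w.count false + 1)),
        fun ν => ?_, fun ν => ?_, ?_, ?_⟩
      · rw [Finset.mem_image]
        constructor
        · rintro ⟨ν, hν, rfl⟩
          obtain ⟨h, h0⟩ := (hA ν).1 hν
          exact ⟨(isBetween_append_true_consPart w _ ν).2 ⟨h0, le_rfl, Nat.le_succ _, h⟩, le_rfl⟩
        · rintro ⟨h, h0⟩
          rw [← consPart_head_tail ν, isBetween_append_true_consPart] at h
          obtain ⟨h1, h2, h3, h4⟩ := h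
          have h5 := le_antisymm h0 h2
          exact ⟨fun y => ν (y + 1), (hA _).2 ⟨h4, h5 ▸ h1⟩, h5 ▸ consPart_head_tail ν⟩
      · rw [Finset.mem_image]
        constructor
        · rintro ⟨ν, hν, rfl⟩
          have h := (hAB ν).1 hν
          exact ⟨(isBetween_append_true_consPart w _ ν).2 ⟨h.le 0, Nat.le_succ _, le_rfl, h⟩, rfl⟩
        · rintro ⟨h, h0⟩
          rw [← consPart_head_tail ν, isBetween_append_true_consPart] at h
          exact ⟨fun y => ν (y + 1), (hAB _).2 h.2.2.2, h0 ▸ consPart_head_tail ν⟩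
      · rw [Finset.sum_image fun ν _ ν' _ h => consPart_injective _ h]
        simp only [sum_consPart, pow_add _ _ (w.count false), ← Finset.sum_mul, hsA]
        ring
      · rw [Finset.sum_image fun ν _ ν' _ h => consPart_injective _ h]
        simp only [sum_consPart, pow_add _ _ (w.count false + 1), ← Finset.sum_mul,
          Finset.sum_union hdisj, hsA, hsB]
        ring

lemma exists_finset_isBetween (w : List Bool) :
    ∃ V : Finset (ℕ → ℕ), (∀ ν, ν ∈ V ↔ IsBetween w ν) ∧
      ∑ ν ∈ V, q ^ (∑ y ∈ Finset.range (snakeHeight w), ν y) =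
        q ^ (∑ y ∈ Finset.range (snakeHeight w), muPart w y) * (fenceGF q (false :: w)).2 := by
  classical
  obtain ⟨A, B, hA, hB, hsA, hsB⟩ := exists_finset_isBetween_split q w
  refine ⟨A ∪ B, fun ν => ?_, ?_⟩
  · rw [Finset.mem_union, hA, hB, ← and_or_left]
    refine and_iff_left_of_imp fun h => ?_
    have := h.le 0
    omega
  · have hdisj : Disjoint A B := Finset.disjoint_left.2 fun ν h1 h2 => by
      have := ((hA ν).1 h1).2
      have := ((hB ν).1 h2).2
      omega
    rw [Finset.sum_union hdisj, snakeHeight, hsA, hsB, ← mul_add, foldl_fenceStepLeft, one_mul]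
    rfl

end GeneratingFunction

section Pivots

lemma card_freeEntries_image {k n : ℕ} (P : Fin k → Fin n) (hP : StrictMono P) :
    (freeEntries (Finset.univ.image P)).card =
      ∑ s : Fin k, (n - 1 - (P s : ℕ) - (k - 1 - (s : ℕ))) := by
  classical
  set I := Finset.univ.image P with hI
  rw [Finset.card_eq_sum_card_fiberwise (f := Prod.fst) (t := I)
    (fun p hp => (Finset.mem_filter.1 hp).2.1), hI, Finset.sum_image (fun _ _ _ _ h => hP.injective h)]
  refine Finset.sum_congr rfl fun s _ => ?_
  have h1 : ((freeEntries I).filter fun p => p.1 = P s) =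
      (Finset.Ioi (P s) \ (Finset.Ioi s).image P).map (Function.Embedding.sectR (P s) (Fin n)) := by
    ext ⟨i, j⟩
    simp only [freeEntries, hI, Finset.mem_filter, Finset.mem_univ, true_and, Finset.mem_image,
      Finset.mem_map, Finset.mem_sdiff, Finset.mem_Ioi, Function.Embedding.sectR_apply,
      Prod.mk.injEq]
    constructor
    · rintro ⟨⟨-, h2, h3⟩, rfl⟩
      exact ⟨j, ⟨h3, fun ⟨t, _, ht⟩ => h2 ⟨t, ht⟩⟩, rfl, rfl⟩
    · rintro ⟨j, ⟨h2, h3⟩, rfl, rfl⟩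
      refine ⟨⟨⟨s, rfl⟩, ?_, h2⟩, rfl⟩
      rintro ⟨t, rfl⟩
      exact h3 ⟨t, hP.lt_iff_lt.1 h2, rfl⟩
  rw [h1, Finset.card_map, Finset.card_sdiff_of_subset, Finset.card_image_of_injective _ hP.injective,
    Fin.card_Ioi, Fin.card_Ioi]
  intro j hj
  obtain ⟨t, ht, rfl⟩ := Finset.mem_image.1 hj
  exact Finset.mem_Ioi.2 (hP (Finset.mem_Ioi.1 ht))

variable {n k : ℕ} {ν : ℕ → ℕ}

/-- The pivot columns of the Schubert cell of `ν` in `Gr_k(n)`. -/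
def pivotCols (n k : ℕ) (ν : ℕ → ℕ) : Finset ℕ :=
  Finset.image (fun i => i + (n - k) - ν i) (Finset.range k)

lemma pivotCol_lt (hν : Antitone ν) (hle : ∀ y, ν y ≤ n - k) {i j : ℕ} (hij : i < j) :
    i + (n - k) - ν i < j + (n - k) - ν j := by
  have := hν hij.le
  have := hle i
  omega

lemma pivotCols_inj {ν' : ℕ → ℕ} (hν : Antitone ν) (hle : ∀ y, ν y ≤ n - k)
    (hν' : Antitone ν') (hle' : ∀ y, ν' y ≤ n - k) (h0 : ∀ y, k ≤ y → ν y = 0)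
    (h0' : ∀ y, k ≤ y → ν' y = 0) (h : pivotCols n k ν = pivotCols n k ν') : ν = ν' := by
  have key := (StrictMono.range_inj (f := fun i : Fin k => (i : ℕ) + (n - k) - ν i)
    (g := fun i : Fin k => (i : ℕ) + (n - k) - ν' i)
    (fun i j hij => pivotCol_lt hν hle hij) (fun i j hij => pivotCol_lt hν' hle' hij)).1 (by
      ext x
      have hx := Finset.ext_iff.1 h x
      simp only [pivotCols, Finset.mem_image, Finset.mem_range] at hx
      simpa [Fin.exists_iff] using hx)
  funext y
  rcases Nat.lt_or_ge y k with hy | hy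
  · have h1 := congrFun key ⟨y, hy⟩
    have := hle y
    have := hle' y
    simp only at h1
    omega
  · rw [h0 y hy, h0' y hy]

variable {K : Type} [Field K]

lemma exists_isPivot_iff (hkn : k ≤ n) (hν : Antitone ν) (hle : ∀ y, ν y ≤ n - k) :
    ∃ I : Finset (Fin n), I.card = k ∧ (freeEntries I).card = ∑ y ∈ Finset.range k, ν y ∧
      ∀ W : Submodule K (Fin n → K),
        (∀ j : ℕ, IsPivot W j ↔ j ∈ pivotCols n k ν) ↔ ∀ j, IsLeading W j ↔ j ∈ I := by
  let P : Fin k → Fin n := fun i => ⟨i + (n - k) - ν i, by omega⟩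
  have hP : StrictMono P := fun i j hij => pivotCol_lt hν hle hij
  refine ⟨Finset.univ.image P, ?_, ?_, fun W => ?_⟩
  · rw [Finset.card_image_of_injective _ hP.injective, Finset.card_univ, Fintype.card_fin]
  · rw [card_freeEntries_image P hP, ← Fin.sum_univ_eq_sum_range]
    refine Finset.sum_congr rfl fun s _ => ?_
    have := hle s
    simp only [P]
    omega
  · have hmem : ∀ j : Fin n, j ∈ Finset.univ.image P ↔ (j : ℕ) ∈ pivotCols n k ν := by
      intro j
      simp [pivotCols, P, Fin.exists_iff, Fin.ext_iff]
    constructor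
    · intro h j
      rw [← isPivot_iff_isLeading, h, hmem]
    · intro h j
      rcases Nat.lt_or_ge j n with hj | hj
      · exact (isPivot_iff_isLeading W ⟨j, hj⟩).trans ((h ⟨j, hj⟩).trans (hmem ⟨j, hj⟩))
      · refine iff_of_false (not_isPivot_of_le W hj) fun h => ?_
        obtain ⟨i, hi, rfl⟩ := Finset.mem_image.1 h
        have := Finset.mem_range.1 hi
        omega

end Pivots

lemma natCard_union_schubert {K : Type} [Field K] [Fintype K] {n k : ℕ} (hkn : k ≤ n)
    (V : Finset (ℕ → ℕ))
    (hV : ∀ ν ∈ V, Antitone ν ∧ (∀ y, ν y ≤ n - k) ∧ ∀ y, k ≤ y → ν y = 0) :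
    Nat.card {W : Submodule K (Fin n → K) // Module.finrank K W = k ∧
        ∃ ν ∈ V, ∀ j : ℕ, IsPivot W j ↔ j ∈ pivotCols n k ν} =
      ∑ ν ∈ V, Fintype.card K ^ (∑ y ∈ Finset.range k, ν y) := by
  classical
  have : Fintype (Submodule K (Fin n → K)) := Fintype.ofFinite _
  rw [Nat.card_eq_fintype_card, Fintype.card_subtype]
  have hset : (Finset.univ.filter fun W : Submodule K (Fin n → K) => Module.finrank K W = k ∧
      ∃ ν ∈ V, ∀ j : ℕ, IsPivot W j ↔ j ∈ pivotCols n k ν) =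
      V.biUnion fun ν => Finset.univ.filter fun W : Submodule K (Fin n → K) =>
        ∀ j : ℕ, IsPivot W j ↔ j ∈ pivotCols n k ν := by
    ext W
    simp only [Finset.mem_filter, Finset.mem_univ, true_and, Finset.mem_biUnion]
    refine and_iff_right_of_imp ?_
    rintro ⟨ν, hν, h⟩
    obtain ⟨h1, h2, -⟩ := hV ν hν
    obtain ⟨I, hI, -, hIW⟩ := exists_isPivot_iff (K := K) hkn h1 h2
    rw [finrank_eq_card I ((hIW W).1 h), hI]
  rw [hset, Finset.card_biUnion]
  · refine Finset.sum_congr rfl fun ν hν => ?_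
    obtain ⟨h1, h2, -⟩ := hV ν hν
    obtain ⟨I, -, hI, hIW⟩ := exists_isPivot_iff (K := K) hkn h1 h2
    rw [← hI, ← natCard_isLeading_iff_mem I, ← Fintype.card_subtype, ← Nat.card_eq_fintype_card]
    exact Nat.card_congr (Equiv.subtypeEquivRight hIW)
  · intro ν hν ν' hν' hne
    refine Finset.disjoint_left.2 fun W hW hW' => hne ?_
    obtain ⟨h1, h2, h3⟩ := hV ν hν
    obtain ⟨h1', h2', h3'⟩ := hV ν' hν'
    refine pivotCols_inj (n := n) (k := k) h1 h2 h1' h2' h3 h3' (Finset.ext fun j => ?_)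
    rw [← (Finset.mem_filter.1 hW).2 j, (Finset.mem_filter.1 hW').2 j]

section SnakeWord

/-- The word obtained from `a` by shortening only the last run. -/
def lastShortened (a : List ℕ) : List Bool :=
  (List.range a.length).flatMap fun i =>
    List.replicate (if i = a.length - 1 then a.getD i 0 - 1 else a.getD i 0) (i % 2 == 1)

lemma lastShortened_eq_extendedWord (m : ℕ) (a : List ℕ) (hm : 0 < m)
    (hlen : a.length = 2 * m) : lastShortened a = extendedWord a := by
  refine even_list_induction (P := fun a => lastShortened a = extendedWord a) ?_ ?_ m a hm hlen
  · intro a b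
    simp [lastShortened, extendedWord, List.range_succ]
  · intro a b l hl ih
    have hl' : 0 < l.length := List.length_pos_iff.2 hl
    rw [extendedWord_cons_cons a b hl, ← ih, lastShortened, List.length_cons, List.length_cons,
      List.range_succ_eq_map, List.flatMap_cons, List.range_succ_eq_map, List.map_cons,
      List.flatMap_cons, List.map_map, List.flatMap_map]
    have h0 : (0 : ℕ) ≠ l.length + 1 + 1 - 1 := by omega
    have h1 : Nat.succ 0 ≠ l.length + 1 + 1 - 1 := by omega
    rw [if_neg h0, if_neg h1]
    congr 1
    congr 1
    refine List.flatMap_congr fun i _ => ?_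
    have h2 : (i + 1 + 1 = l.length + 1 + 1 - 1) ↔ i = l.length - 1 := by omega
    have h3 : (i + 1 + 1) % 2 = i % 2 := by omega
    simp only [Function.comp_apply, Nat.succ_eq_add_one, List.getD_cons_succ, h2, h3]

lemma cons_snakeWord {a : List ℕ} (hlen : 2 ≤ a.length) (hpos : ∀ x ∈ a, 1 ≤ x) :
    false :: snakeWord a = lastShortened a := by
  match a, hlen with
  | x :: l, hlen =>
    obtain ⟨x, rfl⟩ := Nat.exists_eq_add_of_le' (hpos x (by simp))
    have hl : 0 < l.length := Nat.lt_of_succ_le (Nat.le_of_succ_le_succ hlen)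
    rw [snakeWord, lastShortened, List.length_cons, List.range_succ_eq_map, List.flatMap_cons,
      List.flatMap_cons, if_pos (Or.inl rfl), if_neg (by omega), List.getD_cons_zero,
      Nat.add_sub_cancel, List.replicate_succ, List.cons_append, List.flatMap_map,
      List.flatMap_map]
    simp

lemma length_extendedWord (m : ℕ) (a : List ℕ) (hm : 0 < m) (hlen : a.length = 2 * m) :
    (∀ x ∈ a, 1 ≤ x) → (extendedWord a).length + 1 = a.sum := by
  refine even_list_induction (P := fun a => (∀ x ∈ a, 1 ≤ x) →
    (extendedWord a).length + 1 = a.sum) ?_ ?_ m a hm hlen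
  · intro a b h
    have := h b (by simp)
    simp [extendedWord]
    omega
  · intro a b l hl ih h
    have := ih fun x hx => h x (by simp [hx])
    rw [extendedWord_cons_cons a b hl]
    simp
    omega

end SnakeWord

/-- For `r/s = [a₁,…,a₂ₘ]`, `n = ∑ aᵢ`, `k = ∑ a₂ᵢ` (the height of the
snake graph), and `λ = λ(r/s)`, `μ = μ(r/s)`, the number of `F_q`-points of the union
of open Schubert cells `⋃_{μ ≤ ν ≤ λ} Ω°_ν ⊆ Gr_k(F_q^n)` equals `q^{|μ|}·R(q)`,
where `R(q)` is the numerator of the q-rational `[r/s]_q`. -/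
theorem card_union_schubert_cells_eq_qRational_numerator
    (m : ℕ) (hm : 0 < m) (a : List ℕ) (hlen : a.length = 2 * m)
    (hpos : ∀ x ∈ a, 1 ≤ x) (K : Type) [Field K] [Fintype K] :
    (Nat.card {W : Submodule K (Fin a.sum → K) //
        Module.finrank K W = snakeHeight (snakeWord a) ∧
        ∃ ν : ℕ → ℕ, Antitone ν ∧
          (∀ y, muPart (snakeWord a) y ≤ ν y ∧ ν y ≤ lamPart (snakeWord a) y) ∧
          ∀ j : ℕ, IsPivot W j ↔ j ∈ Finset.image
            (fun i => i + (a.sum - snakeHeight (snakeWord a)) - ν i)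
            (Finset.range (snakeHeight (snakeWord a)))} : ℚ) =
      (Fintype.card K : ℚ) ^
          (∑ y ∈ Finset.range (snakeHeight (snakeWord a)), muPart (snakeWord a) y) *
        (qCF RatFunc.X a).num.eval (Fintype.card K : ℚ) := by
  have hword : false :: snakeWord a = extendedWord a := by
    rw [cons_snakeWord (by omega) hpos, lastShortened_eq_extendedWord m a hm hlen]
  have hsum : a.sum = (snakeWord a).count false + (snakeWord a).count true + 2 := by
    rw [← length_extendedWord m a hm hlen hpos, ← hword, List.length_cons,
      ← List.count_false_add_count_true (snakeWord a)]
  obtain ⟨V, hV, hVsum⟩ := exists_finset_isBetween (Fintype.card K : ℚ) (snakeWord a)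
  have hcard := natCard_union_schubert (K := K) (n := a.sum) (k := snakeHeight (snakeWord a))
    (by rw [hsum, snakeHeight]; omega) V fun ν hν => by
      have h := (hV ν).1 hν
      refine ⟨h.1, fun y => ?_, fun y => h.eq_zero⟩
      have := h.le y
      rw [hsum, snakeHeight]
      omega
  rw [eval_num_qCF m a hm hlen hpos, ← hword, ← hVsum]
  simp only [hV, IsBetween, pivotCols, and_assoc] at hcard
  exact_mod_cast hcard
end
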